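/- arXiv:1405.0994 — 3 statements merged into one kernel-verified Lean document; each statement's English description precedes it below -/
import Mathlib

section
/- Let G be a group in the class 𝒟, and let u ∈ G be a non-identity element whose centralizer in G is exactly the cyclic subgroup ⟨u⟩. Let m be a non-zero integer. Then the free product with amalgamation H = G *_{(u = x^m)} ⟨x⟩ also belongs to the class 𝒟. -/
universe u v w x

/-- `P`, together with `ja : A →* P` and `jb : B →* P`, is the free product of `A` and `B`
amalgamating `H` along `φ : H →* A` and `ψ : H →* B`, i.e. the pushout of `φ` and `ψ` in
the category of groups. -/
def IsAmalgamatedFreeProduct {H : Type u} {A : Type v} {B : Type w} {P : Type x}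
    [Group H] [Group A] [Group B] [Group P]
    (φ : H →* A) (ψ : H →* B) (ja : A →* P) (jb : B →* P) : Prop :=
  ja.comp φ = jb.comp ψ ∧
    ∀ (Q : Type (max u v w x)) [Group Q] (f : A →* Q) (g : B →* Q),
      f.comp φ = g.comp ψ → ∃! h : P →* Q, h.comp ja = f ∧ h.comp jb = g

/-- An element `g` of a group is indivisible if it is not a proper power. -/
def Indivisible {G : Type*} [Group G] (g : G) : Prop :=
  ¬ ∃ (v : G) (n : ℕ), 1 < n ∧ v ^ n = g

/-- `g` has no `p`-th root in `G` for some prime `p`. -/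
def NoPrimeRoot {G : Type*} [Group G] (g : G) : Prop :=
  ∃ p : ℕ, p.Prime ∧ ¬ ∃ h : G, h ^ p = g

/-- G. Baumslag's class `𝒟` (for the set of all primes): (1) extraction of roots is
unique; (2) the centralizer of an element with no `p`-th root (some prime `p`) embeds in
the additive group `ℚ`; (3) such an element satisfies `C_G(g^r) = C_G(g)` for `r ≠ 0`;
(4) for such an element, `f⁻¹ g^r f = g^s` with `r, s ≠ 0` implies `r = s`. -/
def ClassD (G : Type*) [Group G] : Prop :=
  (∀ (g h : G) (r : ℤ), r ≠ 0 → g ^ r = h ^ r → g = h) ∧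
    (∀ g : G, NoPrimeRoot g →
      ∃ f : Subgroup.centralizer ({g} : Set G) →* Multiplicative ℚ, Function.Injective f) ∧
    (∀ g : G, NoPrimeRoot g → ∀ r : ℤ, r ≠ 0 →
      Subgroup.centralizer ({g ^ r} : Set G) = Subgroup.centralizer ({g} : Set G)) ∧
    (∀ g : G, NoPrimeRoot g → ∀ (f : G) (r s : ℤ), r ≠ 0 → s ≠ 0 →
      f⁻¹ * g ^ r * f = g ^ s → r = s)

/-- G. Baumslag's class `𝒟₀`: the class `𝒟` together with the condition (5) that the
centralizer of every indivisible element `g` is `⟨g⟩`. -/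
def ClassD0 (G : Type*) [Group G] : Prop :=
  ClassD G ∧ ∀ g : G, Indivisible g →
    Subgroup.centralizer ({g} : Set G) = Subgroup.zpowers g

/-- An integer valued metric satisfying the four point condition in which every point can be
moved one step towards any other point, i.e. the distance function on the vertices of a tree. -/
structure IsTreeMetric {V : Type*} (d : V → V → ℤ) : Prop where
  self (x : V) : d x x = 0
  symm (x y : V) : d x y = d y x
  eq_of_nonpos (x y : V) : d x y ≤ 0 → x = y
  four_point (x y z w : V) :
    d x y + d z w ≤ d x z + d y w ∨ d x y + d z w ≤ d x w + d y z
  exists_step (x y : V) : x ≠ y → ∃ z, d x z = 1 ∧ d z y = d x y - 1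

namespace IsTreeMetric

section Metric

variable {V : Type*} {d : V → V → ℤ} (hd : IsTreeMetric d)

include hd

theorem triangle (x y z : V) : d x z ≤ d x y + d y z := by
  have := hd.four_point x z y y
  have := hd.self y
  have := hd.symm z y
  omega

theorem nonneg (x y : V) : 0 ≤ d x y := by
  have := hd.triangle x y x
  have := hd.self x
  have := hd.symm x y
  omega

theorem pos_of_ne {x y : V} (h : x ≠ y) : 0 < d x y := by
  by_contra hn
  exact h (hd.eq_of_nonpos x y (by omega))

theorem exists_between (x y : V) (n : ℕ) (hn : (n : ℤ) ≤ d x y) :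
    ∃ z, d x z = n ∧ d z y = d x y - n := by
  induction n with
  | zero => exact ⟨x, by simp [hd.self]⟩
  | succ n ih =>
    obtain ⟨z, hxz, hzy⟩ := ih (by push_cast at hn; omega)
    have hne : z ≠ y := by
      rintro rfl
      have := hd.self z
      push_cast at hn
      omega
    obtain ⟨w, hzw, hwy⟩ := hd.exists_step z y hne
    refine ⟨w, ?_, by push_cast; omega⟩
    have := hd.triangle x z w
    have := hd.triangle x w y
    push_cast
    omega

theorem even_iff_of_coloring (c : V → Bool) (hc : ∀ x y, d x y = 1 → c x ≠ c y) (x y : V) :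
    Even (d x y) ↔ c x = c y := by
  obtain ⟨n, hn⟩ := Int.eq_ofNat_of_zero_le (hd.nonneg x y)
  induction n generalizing x with
  | zero =>
    obtain rfl := hd.eq_of_nonpos x y (by simp [hn])
    simp [hd.self]
  | succ n ih =>
    have hne : x ≠ y := by
      rintro rfl
      have := hd.self x
      push_cast at hn
      omega
    obtain ⟨z, hxz, hzy⟩ := hd.exists_step x y hne
    have h1 := ih z (by push_cast at hn; omega)
    rw [hzy, Int.even_sub_one] at h1
    have h2 := hc x z hxz
    revert h1 h2
    cases c x <;> cases c y <;> cases c z <;> simp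

end Metric

section Action

variable {P V : Type*} [Group P] [MulAction P V] {d : V → V → ℤ} (hd : IsTreeMetric d)
  (hinv : ∀ (g : P) (v w : V), d (g • v) (g • w) = d v w)

include hd hinv

theorem smul_eq_of_step {f : P} {v w z : V} (hv : f • v = v) (hw : f • w = w)
    (hvz : d v z = 1) (hzw : d z w = d v w - 1) : f • z = z := by
  have h1 := hinv f v z
  have h2 := hinv f z w
  rw [hv] at h1
  rw [hw] at h2
  have h3 := hd.four_point (f • z) z v w
  have h4 := hd.symm (f • z) v
  have h5 := hd.symm z v
  exact hd.eq_of_nonpos _ _ (by omega)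

theorem dist_smul_lt_of_midpoint {h : P} {p m : V} (hne : h • p ≠ p)
    (hlt : d p (h • h • p) < 2 * d p (h • p))
    (h1 : 2 * d p m = d p (h • p)) (h2 : 2 * d m (h • p) = d p (h • p)) :
    d m (h • m) < d p (h • p) := by
  have e0 := hd.pos_of_ne hne.symm
  have e1 := hinv h p (h • p)
  have e2 := hinv h p m
  have e3 := hinv h m (h • p)
  have f1 := hd.four_point m (h • h • p) p (h • p)
  have f2 := hd.four_point m (h • m) (h • p) (h • h • p)
  have s1 := hd.symm p m
  have s2 := hd.symm (h • h • p) (h • p)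
  have s3 := hd.symm (h • p) (h • m)
  have s4 := hd.symm p (h • h • p)
  omega

theorem dist_pow_smul {h : P} {p : V} (hne : h • p ≠ p)
    (heq : 2 * d p (h • p) ≤ d p (h • h • p)) (n : ℕ) :
    d p (h ^ n • p) = n * d p (h • p) := by
  have e0 := hd.pos_of_ne hne.symm
  have key : ∀ n : ℕ, d p (h ^ n • p) = n * d p (h • p) ∧
      d p (h ^ (n + 1) • p) = n * d p (h • p) + d p (h • p) := by
    intro n
    induction n with
    | zero => simp [hd.self]
    | succ n ih =>
      obtain ⟨ih1, ih2⟩ := ih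
      refine ⟨by rw [ih2]; push_cast; ring, ?_⟩
      have e1 : d (h ^ n • p) (h ^ (n + 1) • p) = d p (h • p) := by
        rw [pow_succ, mul_smul, hinv]
      have e2 : d (h ^ (n + 1) • p) (h ^ (n + 1 + 1) • p) = d p (h • p) := by
        rw [pow_succ _ (n + 1), mul_smul, hinv]
      have e3 : d (h ^ n • p) (h ^ (n + 1 + 1) • p) = d p (h • h • p) := by
        rw [pow_succ, pow_succ, mul_smul, mul_smul, hinv]
      have f1 := hd.four_point p (h ^ (n + 1 + 1) • p) (h ^ n • p) (h ^ (n + 1) • p)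
      have f2 := hd.four_point p (h ^ (n + 1) • p) (h ^ n • p) (h ^ (n + 1 + 1) • p)
      have t := hd.triangle p (h ^ (n + 1) • p) (h ^ (n + 1 + 1) • p)
      have s1 := hd.symm (h ^ (n + 1) • p) (h ^ (n + 1 + 1) • p)
      have s2 := hd.symm (h ^ n • p) (h ^ (n + 1 + 1) • p)
      have s3 := hd.symm (h ^ (n + 1) • p) (h ^ n • p)
      push_cast
      rw [add_mul, one_mul]
      generalize (n : ℤ) * d p (h • p) = N at *
      omega
  exact (key n).1

theorem exists_fixed_or_dist_pow_smul (heven : ∀ (g : P) (v : V), Even (d v (g • v)))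
    [Nonempty V] (h : P) :
    (∃ v : V, h • v = v) ∨
      ∃ (p : V) (τ : ℤ), 0 < τ ∧ ∀ n : ℕ, d p (h ^ n • p) = n * τ := by
  by_cases hfix : ∃ v : V, h • v = v
  · exact Or.inl hfix
  push Not at hfix
  obtain ⟨p, hp⟩ : ∃ p : V, ∀ q : V, d p (h • p) ≤ d q (h • q) := by
    let F : V → ℕ := fun v => (d v (h • v)).toNat
    refine ⟨Function.argmin F, fun q => ?_⟩
    set p := Function.argmin F
    have : (d p (h • p)).toNat ≤ (d q (h • q)).toNat := Function.argmin_le F q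
    have := hd.nonneg p (h • p)
    have := hd.nonneg q (h • q)
    omega
  refine Or.inr ⟨p, d p (h • p), hd.pos_of_ne (hfix p).symm,
    hd.dist_pow_smul hinv (hfix p) ?_⟩
  by_contra hlt
  obtain ⟨k, hk⟩ := heven h p
  have hk0 := hd.pos_of_ne (hfix p).symm
  obtain ⟨m, hm1, hm2⟩ := hd.exists_between p (h • p) k.toNat (by omega)
  have := hd.dist_smul_lt_of_midpoint hinv (hfix p) (by omega) (m := m) (by omega) (by omega)
  have := hp m
  omega

end Action

section Axis

variable {P V : Type*} [Group P] [MulAction P V] {d : V → V → ℤ} (hd : IsTreeMetric d)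
  (hinv : ∀ (g : P) (v w : V), d (g • v) (g • w) = d v w)
  {k : P} {p : V} {τ : ℤ} (hτ : 0 < τ) (hk : ∀ n : ℕ, d p (k ^ n • p) = n * τ)

include hd hinv

omit hd in
theorem dist_inv_smul (f : P) (v w : V) : d (f⁻¹ • v) w = d v (f • w) := by
  rw [← hinv f, smul_inv_smul]

include hk

theorem exists_eventually_dist_pow_smul {f : P} (hf : Commute f k) :
    ∃ (c : ℤ) (N : ℕ), ∀ n ≥ N, d p (k ^ n • f • p) = n * τ + c := by
  have hcomm (n : ℕ) : k ^ n • f • p = f • k ^ n • p := by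
    rw [← mul_smul, ← mul_smul, (hf.pow_right n).eq]
  let b : ℕ → ℕ := fun n => (d p (k ^ n • f • p) - n * τ + d p (f • p)).toNat
  have hnn (n : ℕ) : 0 ≤ d p (k ^ n • f • p) - n * τ + d p (f • p) := by
    have h1 := hd.triangle p (k ^ n • f • p) (k ^ n • p)
    rw [hinv, hd.symm (f • p), hk] at h1
    linarith
  have hanti : Antitone b := by
    refine antitone_nat_of_succ_le fun n => Int.toNat_le_toNat ?_
    have h1 := hd.triangle p (k ^ n • f • p) (k ^ (n + 1) • f • p)
    have h2 : d (k ^ n • f • p) (k ^ (n + 1) • f • p) = τ := by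
      have := hk 1
      rw [hcomm, hcomm, hinv, pow_succ, mul_smul, hinv]
      simpa using this
    push_cast
    linarith
  obtain ⟨N, hN⟩ : ∃ N, ∀ n ≥ N, b N = b n :=
    ⟨Function.argmin b, fun n hn => le_antisymm (Function.argmin_le b n) (hanti hn)⟩
  refine ⟨b N - d p (f • p), N, fun n hn => ?_⟩
  have h1 := hN n hn
  have h2 : (b n : ℤ) = d p (k ^ n • f • p) - n * τ + d p (f • p) := Int.toNat_of_nonneg (hnn n)
  rw [h1, h2]
  ring

include hτ

theorem dist_eq_add_of_large {f g : P} (hg : Commute g k) {j : ℕ}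
    (h1 : d p (g • p) < j) (h2 : d p (f • p) < j) :
    d p (k ^ (j + j) • (g * f) • p) = d p (k ^ j • g • p) + d p (k ^ j • f • p) := by
  have hj : (j : ℤ) ≤ j * τ := le_mul_of_one_le_right (by positivity) hτ
  have hv : d p (k ^ (j + j) • (g * f) • p) = d (g⁻¹ • p) (k ^ (j + j) • f • p) := by
    rw [dist_inv_smul hinv, ← mul_smul g, ← mul_smul, ← mul_smul, ← mul_assoc, (hg.pow_right _).eq]
  have hvz : d p (k ^ j • g • p) = d (g⁻¹ • p) (k ^ j • p) := by
    rw [dist_inv_smul hinv, ← mul_smul, ← mul_smul, (hg.pow_right _).eq]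
  have hzw : d (k ^ j • p) (k ^ (j + j) • f • p) = d p (k ^ j • f • p) := by
    rw [pow_add, mul_smul, hinv]
  have hpp : d p (k ^ (j + j) • p) = j * τ + j * τ := by
    rw [hk]; push_cast; ring
  have hzp : d (k ^ j • p) (k ^ (j + j) • p) = j * τ := by
    rw [pow_add, mul_smul, hinv, hk]
  have hpz := hk j
  have hvp : d (g⁻¹ • p) p = d p (g • p) := dist_inv_smul hinv g p p
  have hwp : d (k ^ (j + j) • p) (k ^ (j + j) • f • p) = d p (f • p) := hinv _ _ _
  rw [hv, hvz, ← hzw]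
  generalize g⁻¹ • p = v at *
  generalize k ^ (j + j) • f • p = w at *
  generalize k ^ (j + j) • p = p' at *
  generalize k ^ j • p = z at *
  generalize (j : ℤ) * τ = J at *
  have f1 := hd.four_point p p' v z
  have f2 := hd.four_point v p' p z
  have f3 := hd.four_point v p' w z
  have t1 := hd.triangle v z w
  have t2 := hd.triangle v p z
  have t3 := hd.triangle p v z
  have t4 := hd.triangle z w p'
  have t5 := hd.triangle v z p'
  have s1 := hd.symm v p
  have s2 := hd.symm w p'
  have s3 := hd.symm p' z
  have s4 := hd.symm p p'
  have s5 := hd.symm v z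
  have s6 := hd.symm w z
  have s7 := hd.symm p' v
  omega

omit hτ in
theorem smul_eq_of_eventually {f : P} {N : ℕ}
    (h1 : ∀ n ≥ N, d p (k ^ n • f • p) = n * τ) (h2 : ∀ n ≥ N, d p (k ^ n • f⁻¹ • p) = n * τ)
    (hf : Commute f k) : f • p = p := by
  have e1 := h1 N le_rfl
  have e2 := h2 N le_rfl
  have e3 := hk N
  have e4 := hk (N + N)
  have a1 : d ((k ^ N)⁻¹ • p) (f • p) = N * τ := by rw [dist_inv_smul hinv, e1]
  have a2 : d (f • p) (k ^ N • p) = N * τ := by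
    rw [← inv_inv f, dist_inv_smul hinv, ← mul_smul, (hf.inv_left.pow_right N).eq,
      mul_smul, e2]
  have a3 : d ((k ^ N)⁻¹ • p) p = N * τ := by rw [dist_inv_smul hinv, e3]
  have a4 : d ((k ^ N)⁻¹ • p) (k ^ N • p) = N * τ + N * τ := by
    rw [dist_inv_smul hinv, ← mul_smul, ← pow_add, e4]; push_cast; ring
  have f1 := hd.four_point (f • p) p ((k ^ N)⁻¹ • p) (k ^ N • p)
  have s1 := hd.symm (f • p) ((k ^ N)⁻¹ • p)
  have s2 := hd.symm ((k ^ N)⁻¹ • p) p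
  exact hd.eq_of_nonpos _ _ (by omega)

theorem exists_injective_centralizer
    (hfix : ∀ (f : P) (v w : V), f • v = v → f • w = w → 3 ≤ d v w → f = 1) :
    ∃ φ : Subgroup.centralizer ({k} : Set P) →* Multiplicative ℤ, Function.Injective φ := by
  have hcomm (f : Subgroup.centralizer ({k} : Set P)) : Commute (f : P) k :=
    (Subgroup.mem_centralizer_singleton_iff.1 f.2)
  choose c N hc using fun f : Subgroup.centralizer ({k} : Set P) =>
    hd.exists_eventually_dist_pow_smul hinv hk (hcomm f)
  have hmul (g f) : c (g * f) = c g + c f := by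
    obtain ⟨j, hj⟩ : ∃ j : ℕ, N (g * f) ≤ j ∧ N g ≤ j ∧ N f ≤ j ∧
        d p ((g : P) • p) < j ∧ d p ((f : P) • p) < j :=
      ⟨N (g * f) + N g + N f + (d p ((g : P) • p)).toNat + (d p ((f : P) • p)).toNat + 1,
        by omega⟩
    have h1 := hc (g * f) (j + j) (by omega)
    have h2 := hc g j (by omega)
    have h3 := hc f j (by omega)
    have h4 := hd.dist_eq_add_of_large hinv hτ hk (hcomm g) (f := f) hj.2.2.2.1 hj.2.2.2.2
    rw [Subgroup.coe_mul] at h1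
    push_cast at h1
    linarith
  let φ : Subgroup.centralizer ({k} : Set P) →* Multiplicative ℤ :=
    MonoidHom.mk' (fun f => Multiplicative.ofAdd (c f)) fun g f => by simp [hmul]
  refine ⟨φ, (injective_iff_map_eq_one φ).2 fun f hf => Subtype.ext ?_⟩
  have hcf : c f = 0 := hf
  have hcf' : c f⁻¹ = 0 := by
    have h1 := hmul f f⁻¹
    have h2 := hmul 1 1
    rw [mul_inv_cancel] at h1
    rw [one_mul] at h2
    omega
  have hfp : (f : P) • p = p := by
    refine hd.smul_eq_of_eventually hinv hk (N := N f + N f⁻¹) (fun n hn => ?_)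
      (fun n hn => ?_) (hcomm f)
    · rw [hc f n (by omega), hcf, add_zero]
    · have := hc f⁻¹ n (by omega)
      rwa [hcf', add_zero] at this
  refine hfix f p (k ^ 3 • p) hfp ?_ ?_
  · rw [← mul_smul, ((hcomm f).pow_right 3).eq, mul_smul, hfp]
  · rw [hk]
    push_cast
    omega

end Axis

end IsTreeMetric

namespace EdgeLabelling

open scoped symmDiff

variable {V E : Type*} [DecidableEq E] {o t : E → V} {pos : V → Finset E}

/-- `v` and `w` are the two endpoints of the edge `e`, whose endpoints are `o e` and `t e`. -/
def Adj (o t : E → V) (e : E) (v w : V) : Prop :=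
  (v = o e ∧ w = t e) ∨ (v = t e ∧ w = o e)

/-- There is an edge path from `v` to `w` all of whose edges separate `v` from `w`. -/
inductive Geodesic (o t : E → V) (pos : V → Finset E) : V → V → Prop
  | refl (v : V) : Geodesic o t pos v v
  | cons {e : E} {v v' w : V} : Adj o t e v v' → Geodesic o t pos v' w →
      e ∈ pos v ∆ pos w → Geodesic o t pos v w

omit [DecidableEq E] in
theorem Adj.symm {e : E} {v w : V} (h : Adj o t e v w) : Adj o t e w v :=
  h.elim (fun h => Or.inr h.symm) (fun h => Or.inl h.symm)

/-- The number of edges separating `v` from `w`. -/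
def edgeDist (pos : V → Finset E) (v w : V) : ℤ := (pos v ∆ pos w).card

section

variable (hpos : ∀ e, pos (o e) ∆ pos (t e) = {e})

include hpos

theorem mem_symmDiff_of_adj {e : E} {v w : V} (h : Adj o t e v w) (f : E) :
    f ∈ pos v ∆ pos w ↔ f = e := by
  obtain ⟨rfl, rfl⟩ | ⟨rfl, rfl⟩ := h
  · rw [hpos, Finset.mem_singleton]
  · rw [symmDiff_comm, hpos, Finset.mem_singleton]

theorem Geodesic.of_adj_of_mem {e : E} {q w z z' : V} (h : Geodesic o t pos q w)
    (hz : Adj o t e z' z) (hq : e ∈ pos q ∆ pos w) (hzw : e ∉ pos z ∆ pos w) :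
    Geodesic o t pos z w := by
  induction h with
  | refl v => simp at hq
  | @cons f v v' w hadj hgeo hf ih =>
    by_cases hv' : e ∈ pos v' ∆ pos w
    · exact ih hv' hzw
    · have hef : e = f := by
        rw [← mem_symmDiff_of_adj hpos hadj]
        grind [Finset.mem_symmDiff]
      subst hef
      have hne : ∀ a b, Adj o t e a b → e ∉ pos a ∆ pos w → e ∉ pos b ∆ pos w → False := by
        intro a b hab ha hb
        have := (mem_symmDiff_of_adj hpos hab e).2 rfl
        grind [Finset.mem_symmDiff]
      have hzv : z = v' := by
        obtain ⟨rfl, rfl⟩ | ⟨rfl, rfl⟩ := hz <;> obtain ⟨rfl, rfl⟩ | ⟨rfl, rfl⟩ := hadj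
        · rfl
        · exact (hne _ _ (Or.inl ⟨rfl, rfl⟩) hv' hzw).elim
        · exact (hne _ _ (Or.inl ⟨rfl, rfl⟩) hzw hv').elim
        · rfl
      exact hzv ▸ hgeo

theorem Geodesic.of_adj {e : E} {v v' w : V} (hadj : Adj o t e v v')
    (h : Geodesic o t pos v' w) : Geodesic o t pos v w := by
  by_cases hv : e ∈ pos v ∆ pos w
  · exact .cons hadj h hv
  · refine h.of_adj_of_mem hpos hadj.symm ?_ hv
    have := (mem_symmDiff_of_adj hpos hadj e).2 rfl
    grind [Finset.mem_symmDiff]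

theorem geodesic_of_reflTransGen {v w : V}
    (h : Relation.ReflTransGen (fun v w => ∃ e, Adj o t e v w) v w) :
    Geodesic o t pos v w := by
  induction h using Relation.ReflTransGen.head_induction_on with
  | refl => exact .refl _
  | head h _ ih => exact h.elim fun e he => .of_adj hpos he ih

theorem Geodesic.notMem_symmDiff {e f : E} {x z : V} (h : Geodesic o t pos x z)
    (he : e ∈ pos x ∆ pos z) (hf : f ∉ pos x ∆ pos z) : f ∉ pos x ∆ pos (o e) := by
  induction h with
  | refl v => simp at he
  | @cons e' x x' z hadj hgeo he' ih =>
    have hfe' : f ≠ e' := by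
      rintro rfl
      exact hf he'
    have hfx : f ∉ pos x ∆ pos x' := by rwa [mem_symmDiff_of_adj hpos hadj]
    by_cases hx' : e ∈ pos x' ∆ pos z
    · have := ih hx'
      grind [Finset.mem_symmDiff]
    · have hee : e = e' := by
        rw [← mem_symmDiff_of_adj hpos hadj]
        grind [Finset.mem_symmDiff]
      subst hee
      obtain ⟨rfl, rfl⟩ | ⟨rfl, rfl⟩ := hadj
      · simp
      · exact hfx

omit hpos in
theorem card_symmDiff_add_le {α : Type*} [DecidableEq α] {a b c e : Finset α}
    (h : ∀ i, i ∈ a ∆ b → i ∈ a ∆ c → i ∉ a ∆ e → i ∈ b ∆ c) :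
    (a ∆ b).card + (c ∆ e).card ≤ (a ∆ e).card + (b ∆ c).card := by
  rw [← Finset.card_union_add_card_inter, ← Finset.card_union_add_card_inter (a ∆ e)]
  refine add_le_add (Finset.card_le_card fun i => ?_) (Finset.card_le_card fun i => ?_) <;>
  · have := h i
    grind [Finset.mem_symmDiff]

variable (hgeo : ∀ v w, Geodesic o t pos v w)

include hgeo

theorem dist_four_point (x y z w : V) :
    edgeDist pos x y + edgeDist pos z w ≤ edgeDist pos x z + edgeDist pos y w ∨
      edgeDist pos x y + edgeDist pos z w ≤ edgeDist pos x w + edgeDist pos y z := by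
  unfold edgeDist
  norm_cast
  by_contra! hcon
  obtain ⟨h1, h2⟩ := hcon
  obtain ⟨f, hf1, hf2, hf3⟩ : ∃ f, f ∈ pos x ∆ pos y ∧ f ∉ pos x ∆ pos w ∧
      f ∉ pos y ∆ pos z := by
    by_contra! hn
    refine h2.not_ge (card_symmDiff_add_le fun i => ?_)
    have := hn i
    tauto
  obtain ⟨e, he1, he2, he3⟩ : ∃ e, e ∈ pos x ∆ pos y ∧ e ∉ pos x ∆ pos z ∧
      e ∉ pos y ∆ pos w := by
    by_contra! hn
    rw [symmDiff_comm (pos z)] at h1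
    refine h1.not_ge (card_symmDiff_add_le fun i => ?_)
    have := hn i
    tauto
  have g1 := (hgeo x w).notMem_symmDiff hpos (e := e) (f := f)
  have g2 := (hgeo y z).notMem_symmDiff hpos (e := e) (f := f)
  grind [Finset.mem_symmDiff]

theorem exists_adj_dist (x y : V) (hxy : x ≠ y) :
    ∃ z e, Adj o t e x z ∧ edgeDist pos z y = edgeDist pos x y - 1 := by
  cases hgeo x y with
  | refl => exact absurd rfl hxy
  | @cons e _ z _ hadj h he =>
    refine ⟨z, e, hadj, ?_⟩
    have : pos z ∆ pos y = (pos x ∆ pos y).erase e := by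
      ext f
      have h1 := mem_symmDiff_of_adj hpos hadj f
      have h2 := mem_symmDiff_of_adj hpos hadj e
      by_cases hfe : f = e <;> grind [Finset.mem_symmDiff]
    unfold edgeDist
    rw [this, Finset.card_erase_of_mem he]
    have := Finset.card_pos.2 ⟨e, he⟩
    omega

omit hgeo in
theorem dist_eq_one_of_adj {e : E} {x y : V} (h : Adj o t e x y) : edgeDist pos x y = 1 := by
  have : pos x ∆ pos y = {e} := by
    ext f
    rw [mem_symmDiff_of_adj hpos h, Finset.mem_singleton]
  simp [edgeDist, this]

theorem eq_of_dist_nonpos (x y : V) (h : edgeDist pos x y ≤ 0) : x = y := by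
  by_contra hxy
  obtain ⟨z, e, -, hz⟩ := exists_adj_dist hpos hgeo x y hxy
  have : 0 ≤ edgeDist pos z y := Int.natCast_nonneg _
  omega

theorem exists_adj_of_dist_eq_one (x y : V) (h : edgeDist pos x y = 1) : ∃ e, Adj o t e x y := by
  have hxy : x ≠ y := by
    rintro rfl
    simp [edgeDist] at h
  obtain ⟨z, e, hadj, hz⟩ := exists_adj_dist hpos hgeo x y hxy
  obtain rfl := eq_of_dist_nonpos hpos hgeo z y (by omega)
  exact ⟨e, hadj⟩

theorem isTreeMetric_edgeDist : IsTreeMetric (edgeDist pos) where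
  self x := by simp [edgeDist]
  symm x y := by simp [edgeDist, symmDiff_comm]
  eq_of_nonpos := eq_of_dist_nonpos hpos hgeo
  four_point := dist_four_point hpos hgeo
  exists_step x y hxy :=
    (exists_adj_dist hpos hgeo x y hxy).imp fun _ ⟨_, hadj, hz⟩ =>
      ⟨dist_eq_one_of_adj hpos hadj, hz⟩

end

end EdgeLabelling

namespace CosetTree

open scoped symmDiff Pointwise
open EdgeLabelling

variable {P : Type*} [Group P] {A X C : Subgroup P} [DecidableEq (P ⧸ C)]

/-- `ρ` is an action of `P` on the finite subsets of `P ⧸ C` which is the translation action on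
`A`, and on `X` is the translation action conjugated by the symmetric difference with the trivial
coset. -/
structure IsTwistedAction (A X C : Subgroup P) [DecidableEq (P ⧸ C)]
    (ρ : P →* Equiv.Perm (Finset (P ⧸ C))) : Prop where
  left (a : P) (ha : a ∈ A) (S : Finset (P ⧸ C)) : ρ a S = a • S
  right (x : P) (hx : x ∈ X) (S : Finset (P ⧸ C)) :
    ρ x S = (x • (S ∆ {((1 : P) : P ⧸ C)})) ∆ {((1 : P) : P ⧸ C)}

variable {ρ : P →* Equiv.Perm (Finset (P ⧸ C))} (hρ : IsTwistedAction A X C ρ)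

/-- The position of a vertex of the coset tree, a finite set of edges. -/
def position (hρ : IsTwistedAction A X C ρ) : (P ⧸ A) ⊕ (P ⧸ X) → Finset (P ⧸ C) :=
  Sum.elim
    (Quotient.lift (fun g : P => ρ g ∅) fun a b hab => by
      have h := hρ.left _ (QuotientGroup.leftRel_apply.1 hab) ∅
      rw [Finset.smul_finset_empty, map_mul, map_inv, Equiv.Perm.mul_apply,
        Equiv.Perm.inv_eq_iff_eq] at h
      exact h.symm)
    (Quotient.lift (fun g : P => ρ g {((1 : P) : P ⧸ C)}) fun a b hab => by
      have h := hρ.right _ (QuotientGroup.leftRel_apply.1 hab) {((1 : P) : P ⧸ C)}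
      rw [symmDiff_self, Finset.bot_eq_empty, Finset.smul_finset_empty, ← Finset.bot_eq_empty,
        bot_symmDiff, map_mul, map_inv, Equiv.Perm.mul_apply, Equiv.Perm.inv_eq_iff_eq] at h
      exact h.symm)

theorem position_inl (g : P) : position hρ (Sum.inl (g : P ⧸ A)) = ρ g ∅ := rfl

theorem position_inr (g : P) :
    position hρ (Sum.inr (g : P ⧸ X)) = ρ g {((1 : P) : P ⧸ C)} := rfl

theorem position_smul (g : P) (v : (P ⧸ A) ⊕ (P ⧸ X)) :
    position hρ (g • v) = ρ g (position hρ v) := by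
  rcases v with v | v <;> induction v using QuotientGroup.induction_on with | _ k => ?_
  · rw [Sum.smul_inl, MulAction.Quotient.smul_coe, position_inl, position_inl, smul_eq_mul,
      map_mul, Equiv.Perm.mul_apply]
  · rw [Sum.smul_inr, MulAction.Quotient.smul_coe, position_inr, position_inr, smul_eq_mul,
      map_mul, Equiv.Perm.mul_apply]

variable (hgen : A ⊔ X = ⊤)

include hρ hgen

theorem symmDiff_map (g : P) (S T : Finset (P ⧸ C)) : ρ g S ∆ ρ g T = g • (S ∆ T) := by
  have hg : g ∈ Subgroup.closure ((A : Set P) ∪ X) := by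
    rw [← Subgroup.sup_eq_closure, hgen]
    trivial
  induction hg using Subgroup.closure_induction generalizing S T with
  | mem x hx =>
    rcases hx with hx | hx
    · rw [hρ.left x hx, hρ.left x hx, Finset.smul_finset_symmDiff]
    · rw [hρ.right x hx, hρ.right x hx, symmDiff_symmDiff_symmDiff_comm, symmDiff_self,
        symmDiff_bot, ← Finset.smul_finset_symmDiff, symmDiff_symmDiff_symmDiff_comm,
        symmDiff_self, symmDiff_bot]
  | one => simp
  | mul x y _ _ ihx ihy =>
    rw [map_mul, Equiv.Perm.mul_apply, Equiv.Perm.mul_apply, ihx, ihy, mul_smul]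
  | inv x _ ih => rw [eq_inv_smul_iff, ← ih, map_inv, Equiv.Perm.inv_def,
      Equiv.apply_symm_apply, Equiv.apply_symm_apply]

theorem dist_smul (g : P) (v w : (P ⧸ A) ⊕ (P ⧸ X)) :
    edgeDist (position hρ) (g • v) (g • w) = edgeDist (position hρ) v w := by
  rw [edgeDist, position_smul, position_smul, symmDiff_map hρ hgen, Finset.card_smul_finset,
    edgeDist]

variable (hCA : C ≤ A) (hCX : C ≤ X)

/-- The endpoint in `P ⧸ A` of an edge. -/
def leftEnd (X : Subgroup P) (hCA : C ≤ A) (e : P ⧸ C) : (P ⧸ A) ⊕ (P ⧸ X) :=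
  Sum.inl (Subgroup.quotientMapOfLE hCA e)

/-- The endpoint in `P ⧸ X` of an edge. -/
def rightEnd (A : Subgroup P) (hCX : C ≤ X) (e : P ⧸ C) : (P ⧸ A) ⊕ (P ⧸ X) :=
  Sum.inr (Subgroup.quotientMapOfLE hCX e)

theorem position_ends (e : P ⧸ C) :
    position hρ (leftEnd X hCA e) ∆ position hρ (rightEnd A hCX e) = {e} := by
  induction e using QuotientGroup.induction_on with | _ g => ?_
  change ρ g ∅ ∆ ρ g {((1 : P) : P ⧸ C)} = _
  rw [symmDiff_map hρ hgen, ← Finset.bot_eq_empty, bot_symmDiff, Finset.smul_finset_singleton,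
    MulAction.Quotient.smul_coe, smul_eq_mul, mul_one]

omit hρ [DecidableEq (P ⧸ C)] in
theorem reflTransGen_adj (v w : (P ⧸ A) ⊕ (P ⧸ X)) :
    Relation.ReflTransGen (fun v w => ∃ e, Adj (leftEnd X hCA) (rightEnd A hCX) e v w) v w := by
  set R := fun v w => ∃ e, Adj (leftEnd X hCA) (rightEnd A hCX) e v w
  have hsymm : Std.Symm R := ⟨fun v w ⟨e, he⟩ => ⟨e, he.symm⟩⟩
  have hedge (g : P) : R (Sum.inl (g : P ⧸ A)) (Sum.inr (g : P ⧸ X)) :=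
    ⟨(g : P ⧸ C), Or.inl ⟨rfl, rfl⟩⟩
  have hone (s : P) (hs : s ∈ (A : Set P) ∪ X) (g : P) :
      Relation.ReflTransGen R (Sum.inl (g : P ⧸ A)) (Sum.inl ((g * s : P) : P ⧸ A)) := by
    rcases hs with hs | hs
    · rw [QuotientGroup.mk_mul_of_mem g hs]
    · refine .head (hedge g) ?_
      rw [← QuotientGroup.mk_mul_of_mem g hs]
      exact .single (hsymm.symm _ _ (hedge (g * s)))
  have hleft (g : P) :
      Relation.ReflTransGen R (Sum.inl ((1 : P) : P ⧸ A)) (Sum.inl (g : P ⧸ A)) := by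
    have hg : g ∈ Subgroup.closure ((A : Set P) ∪ X) := by
      rw [← Subgroup.sup_eq_closure, hgen]
      trivial
    induction hg using Subgroup.closure_induction_right with
    | one => exact .refl
    | mul_right x _ y hy ih => exact ih.trans (hone y hy x)
    | mul_inv_cancel x _ y hy ih =>
      refine ih.trans (hone y⁻¹ ?_ x)
      exact hy.imp A.inv_mem X.inv_mem
  have hall (v : (P ⧸ A) ⊕ (P ⧸ X)) :
      Relation.ReflTransGen R (Sum.inl ((1 : P) : P ⧸ A)) v := by
    rcases v with v | v <;> induction v using QuotientGroup.induction_on with | _ g => ?_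
    · exact hleft g
    · exact (hleft g).tail (hedge g)
  exact (Relation.ReflTransGen.stdSymm.symm _ _ (hall v)).trans (hall w)

theorem geodesic (v w : (P ⧸ A) ⊕ (P ⧸ X)) :
    Geodesic (leftEnd X hCA) (rightEnd A hCX) (position hρ) v w :=
  geodesic_of_reflTransGen (position_ends hρ hgen hCA hCX) (reflTransGen_adj hgen hCA hCX v w)

include hCA hCX in
theorem isTreeMetric : IsTreeMetric (edgeDist (position hρ)) :=
  isTreeMetric_edgeDist (position_ends hρ hgen hCA hCX) (geodesic hρ hgen hCA hCX)

include hCA hCX in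
theorem isLeft_ne_of_dist_eq_one (v w : (P ⧸ A) ⊕ (P ⧸ X)) (h : edgeDist (position hρ) v w = 1) :
    v.isLeft ≠ w.isLeft := by
  obtain ⟨e, ⟨rfl, rfl⟩ | ⟨rfl, rfl⟩⟩ := exists_adj_of_dist_eq_one
    (position_ends hρ hgen hCA hCX) (geodesic hρ hgen hCA hCX) v w h <;>
  simp [leftEnd, rightEnd]

include hCA hCX in
theorem even_dist_smul (g : P) (v : (P ⧸ A) ⊕ (P ⧸ X)) :
    Even (edgeDist (position hρ) v (g • v)) := by
  rw [(isTreeMetric hρ hgen hCA hCX).even_iff_of_coloring Sum.isLeft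
    (isLeft_ne_of_dist_eq_one hρ hgen hCA hCX)]
  rcases v with v | v <;> simp

variable (hmal : ∀ a ∈ A, ∀ c ∈ C, c ≠ 1 → a⁻¹ * c * a ∈ C → a ∈ C)

include hCA hCX hmal

theorem eq_of_smul_eq_of_adj {f : P} (hf : f ≠ 1) {a : P ⧸ A} {b b' : P ⧸ X}
    (ha : f • a = a) (hb : f • b = b) (hb' : f • b' = b')
    (h : edgeDist (position hρ) (Sum.inl a) (Sum.inr b) = 1)
    (h' : edgeDist (position hρ) (Sum.inl a) (Sum.inr b') = 1) : b = b' := by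
  have hedge (b : P ⧸ X) (hb : f • b = b)
      (h : edgeDist (position hρ) (Sum.inl a) (Sum.inr b) = 1) :
      ∃ g : P, a = (g : P ⧸ A) ∧ b = (g : P ⧸ X) ∧ g⁻¹ * f * g ∈ C := by
    obtain ⟨e, ⟨h1, h2⟩ | ⟨h1, -⟩⟩ := exists_adj_of_dist_eq_one
      (position_ends hρ hgen hCA hCX) (geodesic hρ hgen hCA hCX) _ _ h
    · have he : f • e = e := by
        have hp := position_ends hρ hgen hCA hCX e
        have hp' : f • (_ ∆ _) = f • _ := congrArg (f • ·) hp
        rw [← symmDiff_map hρ hgen, ← position_smul, ← position_smul, ← h1, ← h2, Sum.smul_inl,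
          Sum.smul_inr, ha, hb, h1, h2, hp, Finset.smul_finset_singleton,
          Finset.singleton_inj] at hp'
        exact hp'.symm
      induction e using QuotientGroup.induction_on with | _ g => ?_
      refine ⟨g, Sum.inl_injective h1, Sum.inr_injective h2, ?_⟩
      rw [MulAction.Quotient.smul_coe, smul_eq_mul, eq_comm, QuotientGroup.eq] at he
      rwa [mul_assoc]
    · simp [rightEnd] at h1
  obtain ⟨g, rfl, rfl, hg⟩ := hedge b hb h
  obtain ⟨g', hgg', rfl, hg'⟩ := hedge b' hb' h'
  rw [QuotientGroup.eq] at hgg' ⊢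
  refine hCX (hmal _ hgg' _ hg ?_ ?_)
  · intro h1
    apply hf
    rwa [mul_assoc, inv_mul_eq_one, right_eq_mul] at h1
  · convert hg' using 1
    group

theorem eq_of_smul_inr_eq {f : P} (hf : f ≠ 1) {v w : P ⧸ X} (hv : f • v = v)
    (hw : f • w = w) : v = w := by
  have hd := isTreeMetric hρ hgen hCA hCX
  have hinv := dist_smul hρ hgen
  have hc := isLeft_ne_of_dist_eq_one hρ hgen hCA hCX
  by_contra hvw
  have hvw' : (Sum.inr v : (P ⧸ A) ⊕ (P ⧸ X)) ≠ Sum.inr w := fun h => hvw (Sum.inr_injective h)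
  have hv' : f • (Sum.inr v : (P ⧸ A) ⊕ (P ⧸ X)) = Sum.inr v := by rw [Sum.smul_inr, hv]
  have hw' : f • (Sum.inr w : (P ⧸ A) ⊕ (P ⧸ X)) = Sum.inr w := by rw [Sum.smul_inr, hw]
  obtain ⟨a | z, h1, h2⟩ := hd.exists_step _ _ hvw'
  swap
  · simpa using hc _ _ h1
  have hfa := hd.smul_eq_of_step hinv hv' hw' h1 h2
  obtain ⟨z | b, h3, h4⟩ := hd.exists_step (Sum.inl a) (Sum.inr w) Sum.inl_ne_inr
  · simpa using hc _ _ h3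
  have hfb := hd.smul_eq_of_step hinv hfa hw' h3 h4
  rw [hd.symm] at h1
  obtain rfl := eq_of_smul_eq_of_adj hρ hgen hCA hCX hmal hf (Sum.inl_injective hfa) hv
    (Sum.inr_injective hfb) h1 h3
  omega

omit hmal in
/-- An element fixing two distinct vertices fixes a vertex of `P ⧸ X` within distance one of the
first of them. -/
theorem exists_smul_inr_eq {f : P} {v w : (P ⧸ A) ⊕ (P ⧸ X)} (hv : f • v = v) (hw : f • w = w)
    (hvw : v ≠ w) : ∃ b : P ⧸ X, f • b = b ∧ edgeDist (position hρ) v (Sum.inr b) ≤ 1 := by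
  have hd := isTreeMetric hρ hgen hCA hCX
  rcases v with v | v
  · obtain ⟨z | b, h1, h2⟩ := hd.exists_step _ _ hvw
    · simpa using isLeft_ne_of_dist_eq_one hρ hgen hCA hCX _ _ h1
    · exact ⟨b, Sum.inr_injective (hd.smul_eq_of_step (dist_smul hρ hgen) hv hw h1 h2), h1.le⟩
  · exact ⟨v, Sum.inr_injective hv, by rw [hd.self]; exact zero_le_one⟩

theorem eq_one_of_smul_eq_of_three_le (f : P) (v w : (P ⧸ A) ⊕ (P ⧸ X)) (hv : f • v = v)
    (hw : f • w = w) (h : 3 ≤ edgeDist (position hρ) v w) : f = 1 := by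
  have hd := isTreeMetric hρ hgen hCA hCX
  by_contra hf
  have hvw : v ≠ w := by
    rintro rfl
    rw [hd.self] at h
    omega
  obtain ⟨b, hb, h1⟩ := exists_smul_inr_eq hρ hgen hCA hCX hv hw hvw
  obtain ⟨b', hb', h2⟩ := exists_smul_inr_eq hρ hgen hCA hCX hw hv hvw.symm
  obtain rfl := eq_of_smul_inr_eq hρ hgen hCA hCX hmal hf hb hb'
  have := hd.triangle v (Sum.inr b) w
  have := hd.symm w (Sum.inr b)
  omega

end CosetTree

section ClassD

/-- The conditions defining the class `𝒟`, for a single element. -/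
def LocalClassD {G : Type*} [Group G] (g : G) : Prop :=
  (∀ (h : G) (r : ℤ), r ≠ 0 → g ^ r = h ^ r → g = h) ∧
    (NoPrimeRoot g →
      (∃ f : Subgroup.centralizer ({g} : Set G) →* Multiplicative ℚ, Function.Injective f) ∧
      (∀ r : ℤ, r ≠ 0 →
        Subgroup.centralizer ({g ^ r} : Set G) = Subgroup.centralizer ({g} : Set G)) ∧
      (∀ (f : G) (r s : ℤ), r ≠ 0 → s ≠ 0 → f⁻¹ * g ^ r * f = g ^ s → r = s))

theorem classD_of_localClassD {G : Type*} [Group G] (hG : ∀ g : G, g ≠ 1 → LocalClassD g) :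
    ClassD G := by
  have hne : ∀ g : G, NoPrimeRoot g → g ≠ 1 := by
    rintro g ⟨p, -, hp⟩ rfl
    exact hp ⟨1, one_pow p⟩
  refine ⟨fun g h r hr hgh => ?_, fun g hg => ((hG g (hne g hg)).2 hg).1,
    fun g hg => ((hG g (hne g hg)).2 hg).2.1, fun g hg => ((hG g (hne g hg)).2 hg).2.2⟩
  by_cases hg : g = 1
  · by_cases hh : h = 1
    · rw [hg, hh]
    · exact ((hG h hh).1 g r hr hgh.symm).symm
  · exact (hG g hg).1 h r hr hgh

theorem ClassD.zpow_eq_one {G : Type*} [Group G] (hG : ClassD G) {g : G} {r : ℤ} (hr : r ≠ 0)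
    (h : g ^ r = 1) : g = 1 :=
  hG.1 g 1 r hr (by rw [h, one_zpow])

theorem mem_range_of_commute {K P : Type*} [Group K] [Group P] {ι : K →* P} {h f : P}
    (hcomm : ∀ (f : P) (r s : ℤ), r ≠ 0 → s ≠ 0 → f⁻¹ * h ^ r * f = h ^ s → f ∈ ι.range)
    {r : ℤ} (hr : r ≠ 0) (hf : Commute f (h ^ r)) : f ∈ ι.range :=
  hcomm f r r hr hr (by rw [mul_assoc, ← hf.eq, inv_mul_cancel_left])

theorem localClassD_of_commensurator {K P : Type*} [Group K] [Group P] (hK : ClassD K)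
    (ι : K →* P) (hι : Function.Injective ι) {h : P} (hh : h ∈ ι.range)
    (hcomm : ∀ (f : P) (r s : ℤ), r ≠ 0 → s ≠ 0 → f⁻¹ * h ^ r * f = h ^ s → f ∈ ι.range) :
    LocalClassD h := by
  obtain ⟨k, rfl⟩ := hh
  refine ⟨fun g r hr hg => ?_, fun hroot => ?_⟩
  · obtain ⟨l, rfl⟩ := mem_range_of_commute hcomm hr (f := g)
      (by rw [hg]; exact Commute.self_zpow g r)
    rw [← map_zpow, ← map_zpow] at hg
    rw [hK.1 k l r hr (hι hg)]
  have hk : NoPrimeRoot k := by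
    obtain ⟨p, hp, hroot⟩ := hroot
    refine ⟨p, hp, ?_⟩
    rintro ⟨l, rfl⟩
    exact hroot ⟨ι l, (map_pow ι l p).symm⟩
  have hcent (r : ℤ) (f : P) (hr : r ≠ 0) (hf : Commute f (ι k ^ r)) :
      ∃ l, ι l = f ∧ l ∈ Subgroup.centralizer ({k ^ r} : Set K) := by
    obtain ⟨l, rfl⟩ := mem_range_of_commute hcomm hr hf
    refine ⟨l, rfl, Subgroup.mem_centralizer_singleton_iff.2 (hι ?_)⟩
    rw [map_mul, map_mul, map_zpow]
    exact hf
  refine ⟨?_, fun r hr => ?_, fun f r s hr hs hf => ?_⟩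
  · obtain ⟨φ, hφ⟩ := hK.2.1 k hk
    have hle : Subgroup.centralizer ({ι k} : Set P) ≤
        (Subgroup.centralizer ({k} : Set K)).map ι := by
      intro f hf
      obtain ⟨l, rfl, hl⟩ := hcent 1 f one_ne_zero
        (by rw [zpow_one]; exact Subgroup.mem_centralizer_singleton_iff.1 hf)
      rw [zpow_one] at hl
      exact ⟨l, hl, rfl⟩
    let e := (Subgroup.centralizer ({k} : Set K)).equivMapOfInjective ι hι
    exact ⟨(φ.comp e.symm.toMonoidHom).comp (Subgroup.inclusion hle),
      (hφ.comp e.symm.injective).comp (Subgroup.inclusion_injective hle)⟩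
  · ext f
    simp only [Subgroup.mem_centralizer_singleton_iff]
    refine ⟨fun hf => ?_, fun hf => Commute.zpow_right hf r⟩
    obtain ⟨l, rfl, hl⟩ := hcent r f hr hf
    rw [hK.2.2.1 k hk r hr, Subgroup.mem_centralizer_singleton_iff] at hl
    rw [← map_mul, hl, map_mul]
  · obtain ⟨l, rfl⟩ := hcomm f r s hr hs hf
    refine hK.2.2.2 k hk l r s hr hs (hι ?_)
    simpa using hf

theorem classD_of_injective_int {K : Type*} [Group K] (φ : K →* Multiplicative ℤ)
    (hφ : Function.Injective φ) : ClassD K := by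
  have hcomm (a b : K) : a * b = b * a := hφ (by rw [map_mul, map_mul, mul_comm])
  have hzpow (a : K) (r : ℤ) :
      Multiplicative.toAdd (φ (a ^ r)) = r * Multiplicative.toAdd (φ a) := by
    rw [map_zpow, toAdd_zpow, smul_eq_mul]
  refine ⟨fun g h r hr hgh => ?_, fun g _ => ?_, fun g _ r hr => ?_, fun g hg f r s hr hs hf => ?_⟩
  · have h1 := hzpow g r
    rw [hgh, hzpow] at h1
    exact hφ (mul_left_cancel₀ hr h1).symm
  · let ψ : Multiplicative ℤ →* Multiplicative ℚ := AddMonoidHom.toMultiplicative (Int.castAddHom ℚ)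
    have hψ : Function.Injective ψ := fun a b hab => Int.cast_injective (α := ℚ) hab
    exact ⟨(ψ.comp φ).comp (Subgroup.subtype _), (hψ.comp hφ).comp Subtype.val_injective⟩
  · ext f
    simp [Subgroup.mem_centralizer_singleton_iff, hcomm f]
  · have hg1 : g ≠ 1 := by
      rintro rfl
      obtain ⟨p, -, hp⟩ := hg
      exact hp ⟨1, one_pow p⟩
    rw [hcomm f⁻¹, inv_mul_cancel_right] at hf
    have h1 := hzpow g r
    rw [hf, hzpow] at h1
    refine (mul_right_cancel₀ ?_ h1).symm
    intro h0
    exact hg1 (hφ (by rw [map_one]; exact h0))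

end ClassD

namespace IsTreeMetric

variable {P V : Type*} [Group P] [MulAction P V] {d : V → V → ℤ} (hd : IsTreeMetric d)
  (hinv : ∀ (g : P) (v w : V), d (g • v) (g • w) = d v w)
  {h : P} {p : V} {τ : ℤ} (hτ : 0 < τ) (hh : ∀ n : ℕ, d p (h ^ n • p) = n * τ)

include hd hinv hh

theorem dist_zpow_smul (n : ℤ) : d p (h ^ n • p) = |n| * τ := by
  obtain ⟨n, rfl | rfl⟩ := n.eq_nat_or_neg
  · simpa using hh n
  · rw [hd.symm, zpow_neg, dist_inv_smul hinv]
    simpa using hh n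

include hτ

theorem zpow_ne_one {n : ℤ} (hn : n ≠ 0) : h ^ n ≠ 1 := by
  intro h1
  have h2 := hd.dist_zpow_smul hinv hh n
  rw [h1, one_smul, hd.self] at h2
  have := mul_pos (abs_pos.2 hn) hτ
  omega

theorem exists_injective_centralizer_zpow
    (hfix : ∀ (f : P) (v w : V), f • v = v → f • w = w → 3 ≤ d v w → f = 1)
    {r : ℤ} (hr : r ≠ 0) :
    ∃ φ : Subgroup.centralizer ({h ^ r} : Set P) →* Multiplicative ℤ, Function.Injective φ := by
  refine hd.exists_injective_centralizer hinv (p := p) (τ := |r| * τ)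
    (mul_pos (abs_pos.2 hr) hτ) (fun n => ?_) hfix
  rw [← zpow_natCast, ← zpow_mul, hd.dist_zpow_smul hinv hh, abs_mul, Nat.abs_cast]
  ring

theorem abs_eq_of_conj {f : P} {r s : ℤ} (hf : f⁻¹ * h ^ r * f = h ^ s) : |r| = |s| := by
  have hle {f : P} {r s : ℤ} (hf : f⁻¹ * h ^ r * f = h ^ s) : |r| ≤ |s| := by
    by_contra! hlt
    have hpow (n : ℕ) : f⁻¹ * h ^ (r * n) * f = h ^ (s * n) := by
      have := congrArg (· ^ n) hf
      simp only [← zpow_natCast, ← zpow_mul] at this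
      rw [← this]
      have := conj_zpow (i := (n : ℤ)) (a := f⁻¹) (b := h ^ r)
      rw [inv_inv] at this
      rw [this, zpow_mul]
    obtain ⟨n, hn⟩ : ∃ n : ℕ, 2 * d p (f • p) < n := ⟨(2 * d p (f • p)).toNat + 1, by omega⟩
    have h1 := hd.dist_zpow_smul hinv hh (r * n)
    have h2 := hd.dist_zpow_smul hinv hh (s * n)
    have h3 : d (f • p) (h ^ (r * (n : ℤ)) • f • p) = d p (h ^ (s * (n : ℤ)) • p) := by
      rw [← hpow, ← hinv f p, mul_smul, mul_smul, smul_inv_smul]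
    have h4 := hd.triangle p (f • p) (h ^ (r * (n : ℤ)) • p)
    have h5 := hd.triangle (f • p) (h ^ (r * (n : ℤ)) • f • p) (h ^ (r * (n : ℤ)) • p)
    rw [hinv, hd.symm (f • p) p] at h5
    rw [abs_mul, Nat.abs_cast] at h1 h2
    nlinarith [mul_nonneg (mul_nonneg (sub_nonneg.2 hlt.le) (Int.natCast_nonneg n)) hτ.le,
      mul_nonneg (mul_nonneg (by omega : 0 ≤ |r| - |s| - 1) (Int.natCast_nonneg n)) hτ.le,
      mul_nonneg (Int.natCast_nonneg n) (by omega : 0 ≤ τ - 1)]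
  refine le_antisymm (hle hf) (hle (f := f⁻¹) ?_)
  rw [← hf]
  group

theorem localClassD_of_hyperbolic
    (hfix : ∀ (f : P) (v w : V), f • v = v → f • w = w → 3 ≤ d v w → f = 1)
    (htf : ∀ (g : P) (r : ℤ), r ≠ 0 → g ^ r = 1 → g = 1) : LocalClassD h := by
  have hcent {r : ℤ} (hr : r ≠ 0) {f : P} (hf : Commute f (h ^ r)) : Commute f h := by
    obtain ⟨φ, hφ⟩ := hd.exists_injective_centralizer_zpow hinv hτ hh hfix hr
    have hmem : h ∈ Subgroup.centralizer ({h ^ r} : Set P) :=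
      Subgroup.mem_centralizer_singleton_iff.2 (Commute.self_zpow h r)
    have hfmem : f ∈ Subgroup.centralizer ({h ^ r} : Set P) :=
      Subgroup.mem_centralizer_singleton_iff.2 hf
    have : (⟨f, hfmem⟩ * ⟨h, hmem⟩ : Subgroup.centralizer ({h ^ r} : Set P)) =
        ⟨h, hmem⟩ * ⟨f, hfmem⟩ := hφ (by rw [map_mul, map_mul, mul_comm])
    exact congrArg Subtype.val this
  obtain ⟨φ, hφ⟩ : ∃ φ : Subgroup.centralizer ({h} : Set P) →* Multiplicative ℤ,
      Function.Injective φ := by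
    have hφ := hd.exists_injective_centralizer_zpow hinv hτ hh hfix one_ne_zero
    rwa [zpow_one] at hφ
  have hmem : h ∈ Subgroup.centralizer ({h} : Set P) :=
    Subgroup.mem_centralizer_singleton_iff.2 rfl
  refine localClassD_of_commensurator (classD_of_injective_int φ hφ) (Subgroup.subtype _)
    Subtype.val_injective ?_ fun f r s hr hs hf => ?_
  · rw [Subgroup.range_subtype, Subgroup.mem_centralizer_singleton_iff]
  · rw [Subgroup.range_subtype, Subgroup.mem_centralizer_singleton_iff]
    rcases abs_eq_abs.1 (hd.abs_eq_of_conj hinv hτ hh hf) with rfl | rfl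
    · refine hcent hr ?_
      rw [mul_assoc, inv_mul_eq_iff_eq_mul] at hf
      exact hf.symm
    · have hf' : h ^ s * f = f * h ^ (-s) := by
        have hi : f⁻¹ * h ^ s * f = h ^ (-s) := by simpa [mul_assoc] using congrArg (·⁻¹) hf
        rw [← hi]
        group
      have hsq : f ^ 2 ∈ Subgroup.centralizer ({h} : Set P) := by
        refine Subgroup.mem_centralizer_singleton_iff.2 (hcent hs ?_)
        have hf'' : h ^ (-s) * f = f * h ^ s := by rw [← hf]; group
        rw [Commute, SemiconjBy, pow_two, mul_assoc, ← hf'', ← mul_assoc, ← hf', mul_assoc]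
      obtain ⟨b, hb⟩ : ∃ b : ℤ, b = Multiplicative.toAdd (φ ⟨f ^ 2, hsq⟩) := ⟨_, rfl⟩
      obtain ⟨a, ha⟩ : ∃ a : ℤ, a = Multiplicative.toAdd (φ ⟨h, hmem⟩) := ⟨_, rfl⟩
      have hpow : (f ^ 2) ^ a = h ^ b := by
        have : (⟨f ^ 2, hsq⟩ : Subgroup.centralizer ({h} : Set P)) ^ a = ⟨h, hmem⟩ ^ b := by
          apply hφ
          apply Multiplicative.toAdd.injective
          rw [map_zpow φ, map_zpow φ, toAdd_zpow, toAdd_zpow, ← ha, ← hb, smul_eq_mul,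
            smul_eq_mul, mul_comm]
        exact congrArg Subtype.val this
      by_cases hb0 : b = 0
      · have h1 : (⟨f ^ 2, hsq⟩ : Subgroup.centralizer ({h} : Set P)) = 1 := by
          apply hφ
          rw [map_one]
          exact hb.symm.trans hb0
        have hf2 : f ^ 2 = 1 := congrArg Subtype.val h1
        rw [htf f 2 two_ne_zero (by exact_mod_cast hf2), one_mul, mul_one]
      · refine hcent hb0 ?_
        rw [← hpow]
        exact ((Commute.refl f).pow_right 2).zpow_right a

end IsTreeMetric

theorem zpow_smul_eq {P α : Type*} [Group P] [MulAction P α] {h : P} {v : α} (hv : h • v = v)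
    (r : ℤ) : h ^ r • v = v :=
  (MulAction.stabilizer P v).zpow_mem hv r

theorem zpow_smul_smul_eq {P α : Type*} [Group P] [MulAction P α] {h : P} {v : α} (hv : h • v = v)
    {f : P} {r s : ℤ} (hf : f⁻¹ * h ^ r * f = h ^ s) : h ^ r • f • v = f • v := by
  have := zpow_smul_eq hv s
  rwa [← hf, mul_smul, mul_smul, inv_smul_eq_iff] at this

theorem ClassD.eq_one_of_mem_range {K P : Type*} [Group K] [Group P] (hK : ClassD K) {ι : K →* P}
    (hι : Function.Injective ι) {h : P} (hh : h ∈ ι.range) {r : ℤ} (hr : r ≠ 0) (h1 : h ^ r = 1) :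
    h = 1 := by
  obtain ⟨k, rfl⟩ := hh
  rw [← map_zpow] at h1
  rw [hK.zpow_eq_one hr (hι (h1.trans (map_one ι).symm)), map_one]

namespace CosetTree

open EdgeLabelling

variable {P G₁ G₂ : Type*} [Group P] [Group G₁] [Group G₂] {jA : G₁ →* P} {jX : G₂ →* P}
  {C : Subgroup P} [DecidableEq (P ⧸ C)] {ρ : P →* Equiv.Perm (Finset (P ⧸ C))}

/-- The stabilizer of a left coset of the range of `j` is a conjugate of this range. -/
theorem smul_coe_range_iff {K : Type*} [Group K] (j : K →* P) (f g : P) :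
    f • (g : P ⧸ j.range) = g ↔ f ∈ ((MulAut.conj g).toMonoidHom.comp j).range := by
  rw [MulAction.Quotient.smul_coe, smul_eq_mul, eq_comm, QuotientGroup.eq]
  refine exists_congr fun k => ?_
  change j k = _ ↔ g * j k * g⁻¹ = f
  rw [mul_inv_eq_iff_eq_mul, eq_inv_mul_iff_mul_eq]

theorem injective_conj_comp {K : Type*} [Group K] {j : K →* P} (hj : Function.Injective j)
    (g : P) : Function.Injective ((MulAut.conj g).toMonoidHom.comp j) :=
  (MulAut.conj g).injective.comp hj

/-- A group generated by two subgroups of class `𝒟` is of class `𝒟` if it has a twisted action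
relative to a common subgroup `C` of them and `C` is malnormal in the first one. -/
theorem classD (hρ : IsTwistedAction jA.range jX.range C ρ) (hgen : jA.range ⊔ jX.range = ⊤)
    (hCA : C ≤ jA.range) (hCX : C ≤ jX.range)
    (hmal : ∀ a ∈ jA.range, ∀ c ∈ C, c ≠ 1 → a⁻¹ * c * a ∈ C → a ∈ C)
    (hA : ClassD G₁) (hjA : Function.Injective jA) (hX : ClassD G₂) (hjX : Function.Injective jX) :
    ClassD P := by
  have hd := isTreeMetric hρ hgen hCA hCX
  have hinv := dist_smul hρ hgen
  have hcases := hd.exists_fixed_or_dist_pow_smul hinv (even_dist_smul hρ hgen hCA hCX)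
  have htf (h : P) (r : ℤ) (hr : r ≠ 0) (h1 : h ^ r = 1) : h = 1 := by
    rcases hcases h with ⟨a | b, hv⟩ | ⟨p, τ, hτ, hh⟩
    · induction a using QuotientGroup.induction_on with | _ g => ?_
      exact hA.eq_one_of_mem_range (injective_conj_comp hjA g)
        ((smul_coe_range_iff jA h g).1 (Sum.inl_injective hv)) hr h1
    · induction b using QuotientGroup.induction_on with | _ g => ?_
      exact hX.eq_one_of_mem_range (injective_conj_comp hjX g)
        ((smul_coe_range_iff jX h g).1 (Sum.inr_injective hv)) hr h1
    · exact absurd h1 (hd.zpow_ne_one hinv hτ hh hr)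
  refine classD_of_localClassD fun h h1 => ?_
  have hr1 (r : ℤ) (hr : r ≠ 0) : h ^ r ≠ 1 := fun h' => h1 (htf h r hr h')
  by_cases hfixX : ∃ b : P ⧸ jX.range, h • b = b
  · obtain ⟨b, hb⟩ := hfixX
    induction b using QuotientGroup.induction_on with | _ g => ?_
    refine localClassD_of_commensurator hX _ (injective_conj_comp hjX g)
      ((smul_coe_range_iff jX h g).1 hb) fun f r s hr hs hf => (smul_coe_range_iff jX f g).1 ?_
    exact eq_of_smul_inr_eq hρ hgen hCA hCX hmal (hr1 r hr) (zpow_smul_smul_eq hb hf)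
      (zpow_smul_eq hb r)
  rcases hcases h with ⟨a | b, hv⟩ | ⟨p, τ, hτ, hh⟩
  · have ha := Sum.inl_injective hv
    induction a using QuotientGroup.induction_on with | _ g => ?_
    refine localClassD_of_commensurator hA _ (injective_conj_comp hjA g)
      ((smul_coe_range_iff jA h g).1 ha) fun f r s hr hs hf => (smul_coe_range_iff jA f g).1 ?_
    by_contra hne
    obtain ⟨b, hb, -⟩ := exists_smul_inr_eq hρ hgen hCA hCX (zpow_smul_smul_eq hv hf)
      (zpow_smul_eq hv r)
      fun h => hne (Sum.inl_injective h)
    refine hfixX ⟨b, eq_of_smul_inr_eq hρ hgen hCA hCX hmal (hr1 r hr) ?_ hb⟩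
    rw [← mul_smul, (Commute.self_zpow h r).symm.eq, mul_smul, hb]
  · exact absurd ⟨b, Sum.inr_injective hv⟩ hfixX
  · exact hd.localClassD_of_hyperbolic hinv hτ hh
      (eq_one_of_smul_eq_of_three_le hρ hgen hCA hCX hmal) htf

end CosetTree

section Pushout

theorem IsAmalgamatedFreeProduct.range_sup_range {H : Type u} {A : Type v} {B : Type w} {P : Type x}
    [Group H] [Group A] [Group B] [Group P] {φ : H →* A} {ψ : H →* B} {ja : A →* P} {jb : B →* P}
    (hP : IsAmalgamatedFreeProduct φ ψ ja jb) : ja.range ⊔ jb.range = ⊤ := by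
  let K := ja.range ⊔ jb.range
  let e : P ≃* ULift.{max u v w x} P := MulEquiv.ulift.symm
  let eK : K ≃* ULift.{max u v w x} K := MulEquiv.ulift.symm
  let fa : A →* K := ja.codRestrict K fun a => Subgroup.mem_sup_left ⟨a, rfl⟩
  let fb : B →* K := jb.codRestrict K fun b => Subgroup.mem_sup_right ⟨b, rfl⟩
  have hfab : fa.comp φ = fb.comp ψ := by
    ext c
    exact DFunLike.congr_fun hP.1 c
  obtain ⟨r, ⟨hra, hrb⟩, -⟩ := hP.2 (ULift.{max u v w x} K) (eK.toMonoidHom.comp fa)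
    (eK.toMonoidHom.comp fb) (by rw [MonoidHom.comp_assoc, hfab, MonoidHom.comp_assoc])
  have hid := (hP.2 (ULift.{max u v w x} P) (e.toMonoidHom.comp ja) (e.toMonoidHom.comp jb)
    (by rw [MonoidHom.comp_assoc, hP.1, MonoidHom.comp_assoc])).unique
    (y₁ := e.toMonoidHom) (y₂ := e.toMonoidHom.comp (K.subtype.comp
      (eK.symm.toMonoidHom.comp r))) ⟨rfl, rfl⟩ ⟨?_, ?_⟩
  · rw [eq_top_iff]
    intro p _
    rw [e.injective (DFunLike.congr_fun hid p)]
    exact Subtype.property _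
  · ext a
    have h := DFunLike.congr_fun hra a
    simp only [MonoidHom.comp_apply] at h ⊢
    rw [h]
    rfl
  · ext b
    have h := DFunLike.congr_fun hrb b
    simp only [MonoidHom.comp_apply] at h ⊢
    rw [h]
    rfl

variable {G P : Type u} [Group G] [Group P] {u : G} {m : ℤ} {jG : G →* P}
  {jx : Multiplicative ℤ →* P}
  (hP : IsAmalgamatedFreeProduct (zpowersHom G u)
    (zpowersHom (Multiplicative ℤ) (Multiplicative.ofAdd m)) jG jx)

include hP

theorem map_ofAdd_of_rootAdjunction : jx (Multiplicative.ofAdd m) = jG u := by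
  have h := DFunLike.congr_fun hP.1 (Multiplicative.ofAdd 1)
  simpa using h.symm

theorem injective_left_of_rootAdjunction (hu : ∀ n : ℤ, n ≠ 0 → u ^ n ≠ 1) (hm : m ≠ 0) :
    Function.Injective jG := by
  let φ : Bool → Multiplicative ℤ →* G × Multiplicative ℤ := fun i =>
    bif i then (MonoidHom.inl G (Multiplicative ℤ)).comp (zpowersHom G u)
    else (MonoidHom.inr G (Multiplicative ℤ)).comp
      (zpowersHom (Multiplicative ℤ) (Multiplicative.ofAdd m))
  have hφ (i : Bool) : Function.Injective (φ i) := by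
    rw [injective_iff_map_eq_one]
    intro n hn
    cases i
    · have h : Multiplicative.ofAdd m ^ Multiplicative.toAdd n = 1 := congrArg Prod.snd hn
      rw [← ofAdd_zsmul, smul_eq_mul, ofAdd_eq_one] at h
      exact (mul_eq_zero.1 h).resolve_right hm
    · by_contra hn1
      exact hu n hn1 (congrArg Prod.fst hn)
  obtain ⟨r, ⟨hr, -⟩, -⟩ := hP.2 (Monoid.PushoutI φ)
    ((Monoid.PushoutI.of (φ := φ) true).comp (MonoidHom.inl G (Multiplicative ℤ)))
    ((Monoid.PushoutI.of (φ := φ) false).comp (MonoidHom.inr G (Multiplicative ℤ)))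
    ((Monoid.PushoutI.of_comp_eq_base (φ := φ) true).trans
      (Monoid.PushoutI.of_comp_eq_base (φ := φ) false).symm)
  refine Function.Injective.of_comp (f := r) ?_
  rw [← MonoidHom.coe_comp, hr]
  exact (Monoid.PushoutI.of_injective hφ true).comp fun a b hab => congrArg Prod.fst hab

theorem injective_right_of_rootAdjunction (hu : ∀ n : ℤ, n ≠ 0 → u ^ n ≠ 1) (hm : m ≠ 0) :
    Function.Injective jx := by
  rw [injective_iff_map_eq_one]
  intro n hn
  by_contra hn1
  refine hu (Multiplicative.toAdd n) hn1 (injective_left_of_rootAdjunction hP hu hm ?_)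
  rw [map_zpow, ← map_ofAdd_of_rootAdjunction hP, ← map_zpow, ← ofAdd_zsmul, smul_eq_mul,
    mul_comm, ← smul_eq_mul, ofAdd_zsmul, ofAdd_toAdd, map_zpow, hn, one_zpow, map_one]

open scoped symmDiff Pointwise in
theorem exists_isTwistedAction [DecidableEq (P ⧸ Subgroup.zpowers (jG u))] :
    ∃ ρ : P →* Equiv.Perm (Finset (P ⧸ Subgroup.zpowers (jG u))),
      CosetTree.IsTwistedAction jG.range jx.range (Subgroup.zpowers (jG u)) ρ := by
  let C := Subgroup.zpowers (jG u)
  let o : Finset (P ⧸ C) := {((1 : P) : P ⧸ C)}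
  let τ : Equiv.Perm (Finset (P ⧸ C)) :=
    Function.Involutive.toPerm (fun S => S ∆ o) fun S => symmDiff_symmDiff_cancel_right o S
  have hτ (S : Finset (P ⧸ C)) : τ S = S ∆ o := rfl
  have hτ' : τ⁻¹ = τ := rfl
  let T := MulAction.toPermHom P (Finset (P ⧸ C))
  obtain ⟨ρ, ⟨hl, hr⟩, -⟩ := hP.2 (Equiv.Perm (Finset (P ⧸ C))) (T.comp jG)
    ((MulAut.conj τ).toMonoidHom.comp (T.comp jx)) (by
      rw [MonoidHom.comp_assoc, MonoidHom.comp_assoc, MonoidHom.comp_assoc, ← hP.1]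
      refine MonoidHom.ext fun n => Equiv.ext fun S => ?_
      have ho : jG (zpowersHom G u n) • o = o := by
        rw [Finset.smul_finset_singleton, Finset.singleton_inj, MulAction.Quotient.smul_coe,
          smul_eq_mul, mul_one, eq_comm, QuotientGroup.eq, inv_one, one_mul]
        exact ⟨Multiplicative.toAdd n, by simp⟩
      change jG (zpowersHom G u n) • S = τ (jG (zpowersHom G u n) • τ⁻¹ S)
      rw [hτ', hτ, hτ, Finset.smul_finset_symmDiff, ho, symmDiff_symmDiff_cancel_right])
  refine ⟨ρ, ?_, ?_⟩
  · rintro _ ⟨a, rfl⟩ S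
    exact congrArg (· S) (DFunLike.congr_fun hl a)
  · rintro _ ⟨y, rfl⟩ S
    exact congrArg (· S) (DFunLike.congr_fun hr y)

end Pushout

theorem ClassD.noPrimeRoot_of_centralizer_eq_zpowers {G : Type*} [Group G] (hG : ClassD G) {u : G}
    (hu : u ≠ 1) (hcent : Subgroup.centralizer ({u} : Set G) = Subgroup.zpowers u) :
    NoPrimeRoot u := by
  refine ⟨2, Nat.prime_two, ?_⟩
  rintro ⟨h, hh⟩
  have hmem : h ∈ Subgroup.centralizer ({u} : Set G) := by
    rw [Subgroup.mem_centralizer_singleton_iff, ← hh]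
    exact Commute.self_pow h 2
  rw [hcent] at hmem
  obtain ⟨n, rfl⟩ := hmem
  refine hu (hG.zpow_eq_one (r := n * 2 - 1) (by omega) ?_)
  rw [zpow_sub, zpow_mul, zpow_one, zpow_ofNat]
  simpa using mul_inv_eq_one.2 hh

theorem ClassD.mem_zpowers_of_conj {G : Type*} [Group G] (hG : ClassD G) {u : G} (hu : u ≠ 1)
    (hcent : Subgroup.centralizer ({u} : Set G) = Subgroup.zpowers u) {f : G} {r s : ℤ}
    (hr : r ≠ 0) (hf : f⁻¹ * u ^ r * f = u ^ s) : f ∈ Subgroup.zpowers u := by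
  have hroot := hG.noPrimeRoot_of_centralizer_eq_zpowers hu hcent
  have hs : s ≠ 0 := by
    rintro rfl
    rw [zpow_zero, mul_assoc, inv_mul_eq_one, right_eq_mul] at hf
    exact hu (hG.zpow_eq_one hr hf)
  obtain rfl := hG.2.2.2 u hroot f r s hr hs hf
  rw [← hcent, ← hG.2.2.1 u hroot r hr, Subgroup.mem_centralizer_singleton_iff]
  rw [mul_assoc, inv_mul_eq_iff_eq_mul] at hf
  exact hf.symm

/-- **Proposition 6.1.** If `G ∈ 𝒟`, `u ∈ G` is a non-identity element with
`C_G(u) = ⟨u⟩`, and `m ≠ 0`, then the free product with amalgamation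
`H = G *_{(u = xᵐ)} ⟨x⟩` is also in `𝒟`.  The amalgamated product is any pushout `P` of
`ℤ → G, 1 ↦ u` and `ℤ → ℤ = ⟨x⟩, 1 ↦ m`. -/
theorem classD_of_amalgamated_root_adjunction
    {G : Type u} [Group G] (hG : ClassD G)
    (u : G) (hu : u ≠ 1)
    (hcent : Subgroup.centralizer ({u} : Set G) = Subgroup.zpowers u)
    (m : ℤ) (hm : m ≠ 0)
    {P : Type u} [Group P] (jG : G →* P) (jx : Multiplicative ℤ →* P)
    (hP : IsAmalgamatedFreeProduct (zpowersHom G u)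
      (zpowersHom (Multiplicative ℤ) (Multiplicative.ofAdd m)) jG jx) :
    ClassD P := by
  classical
  have hu' (n : ℤ) (hn : n ≠ 0) : u ^ n ≠ 1 := fun h => hu (hG.zpow_eq_one hn h)
  have hjG := injective_left_of_rootAdjunction hP hu' hm
  have hjx := injective_right_of_rootAdjunction hP hu' hm
  have hgen := hP.range_sup_range
  have hCA : Subgroup.zpowers (jG u) ≤ jG.range := Subgroup.zpowers_le.2 ⟨u, rfl⟩
  have hCX : Subgroup.zpowers (jG u) ≤ jx.range :=
    Subgroup.zpowers_le.2 ⟨_, map_ofAdd_of_rootAdjunction hP⟩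
  have hmal : ∀ a ∈ jG.range, ∀ c ∈ Subgroup.zpowers (jG u), c ≠ 1 →
      a⁻¹ * c * a ∈ Subgroup.zpowers (jG u) → a ∈ Subgroup.zpowers (jG u) := by
    rintro _ ⟨f, rfl⟩ _ ⟨r, rfl⟩ hr ⟨s, hs⟩
    have hf : f⁻¹ * u ^ r * f = u ^ s := hjG (by simpa using hs.symm)
    obtain ⟨n, rfl⟩ := hG.mem_zpowers_of_conj hu hcent (by rintro rfl; simp at hr) hf
    exact ⟨n, (map_zpow jG u n).symm⟩
  obtain ⟨ρ, hρ⟩ := exists_isTwistedAction hP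
  have hX : ClassD (Multiplicative ℤ) := classD_of_injective_int (MonoidHom.id _) fun _ _ h => h
  exact CosetTree.classD hρ hgen hCA hCX hmal hG hjG hX hjx
end

section
/- Let G be a group in the class 𝒟₀ and let u be an indivisible element of G. Let m be a non-zero integer. Then the free product with amalgamation H = G *_{(u = x^m)} ⟨x⟩ also belongs to the class 𝒟₀. -/
universe u v w x

section ClassD0

/-- To check `ClassD0 P` it suffices to embed, for each `g ≠ 1`, a group in `ClassD0` whose image
contains every element conjugating a non-trivial power of `g` to a non-trivial power of `g`. -/
theorem ClassD0.of_forall_ne_one {P : Type u} [Group P]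
    (h : ∀ g : P, g ≠ 1 → ∃ (K : Type v) (_ : Group K) (j : K →* P), Function.Injective j ∧
      ClassD0 K ∧ ∀ (f : P) (r s : ℤ), r ≠ 0 → s ≠ 0 → f⁻¹ * g ^ r * f = g ^ s → f ∈ j.range) :
    ClassD0 P := by
  have comm_mem {K : Type v} [Group K] {j : K →* P} {g : P}
      (hE : ∀ (f : P) (r s : ℤ), r ≠ 0 → s ≠ 0 → f⁻¹ * g ^ r * f = g ^ s → f ∈ j.range)
      {f : P} {r : ℤ} (hr : r ≠ 0) (hf : g ^ r * f = f * g ^ r) : f ∈ j.range :=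
    hE f r r hr hr (by rw [mul_assoc, hf, inv_mul_cancel_left])
  have self_mem {K : Type v} [Group K] {j : K →* P} {g : P}
      (hE : ∀ (f : P) (r s : ℤ), r ≠ 0 → s ≠ 0 → f⁻¹ * g ^ r * f = g ^ s → f ∈ j.range) :
      g ∈ j.range := comm_mem hE one_ne_zero (by simp)
  have root {K : Type v} [Group K] (j : K →* P) {k : K} (hk : NoPrimeRoot (j k)) :
      NoPrimeRoot k := by
    obtain ⟨p, hp, hn⟩ := hk
    exact ⟨p, hp, fun ⟨v, hv⟩ => hn ⟨j v, by rw [← map_pow, hv]⟩⟩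
  have ne_one {g : P} (hg : NoPrimeRoot g) : g ≠ 1 := by
    rintro rfl
    obtain ⟨p, hp, hn⟩ := hg
    exact hn ⟨1, one_pow p⟩
  have torsion (g : P) (r : ℤ) (hr : r ≠ 0) (hg : g ^ r = 1) : g = 1 := by
    by_contra hne
    obtain ⟨K, _, j, hj, hK, hE⟩ := h g hne
    obtain ⟨k, rfl⟩ := self_mem hE
    refine hne ?_
    rw [← map_zpow, ← map_one j] at hg
    rw [hK.1.1 k 1 r hr (by rw [hj hg, one_zpow]), map_one]
  refine ⟨⟨fun g f r hr hgf => ?_, fun g hg => ?_, fun g hg r hr => ?_,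
    fun g hg f r s hr hs hf => ?_⟩, fun g hg => ?_⟩
  · by_cases hne : g = 1
    · subst hne
      rw [one_zpow] at hgf
      exact (torsion f r hr hgf.symm).symm
    obtain ⟨K, _, j, hj, hK, hE⟩ := h g hne
    obtain ⟨k, rfl⟩ := self_mem hE
    obtain ⟨l, rfl⟩ : f ∈ j.range := comm_mem hE hr (by
      rw [hgf, ← zpow_add_one, ← zpow_one_add, add_comm])
    rw [← map_zpow, ← map_zpow] at hgf
    rw [hK.1.1 k l r hr (hj hgf)]
  · obtain ⟨K, _, j, hj, hK, hE⟩ := h g (ne_one hg)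
    obtain ⟨k, rfl⟩ := self_mem hE
    obtain ⟨e, he⟩ := hK.1.2.1 k (root j hg)
    have hmem (c : Subgroup.centralizer ({j k} : Set P)) : (c : P) ∈ j.range :=
      comm_mem hE one_ne_zero (by
        simpa using (Subgroup.mem_centralizer_singleton_iff.1 c.2).symm)
    let t : Subgroup.centralizer ({j k} : Set P) →* K :=
      (MonoidHom.ofInjective hj).symm.toMonoidHom.comp
        ((Subgroup.centralizer ({j k} : Set P)).subtype.codRestrict j.range hmem)
    have ht (c) : j (t c) = c := by
      have := MonoidHom.apply_ofInjective_symm hj ⟨c, hmem c⟩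
      exact this
    refine ⟨e.comp (t.codRestrict _ fun c => ?_), he.comp fun a b hab => ?_⟩
    · rw [Subgroup.mem_centralizer_singleton_iff]
      apply hj
      rw [map_mul, map_mul, ht]
      exact Subgroup.mem_centralizer_singleton_iff.1 c.2
    · have : t a = t b := congrArg Subtype.val hab
      exact Subtype.ext (by rw [← ht a, ← ht b, this])
  · obtain ⟨K, _, j, hj, hK, hE⟩ := h g (ne_one hg)
    ext f
    simp only [Subgroup.mem_centralizer_singleton_iff]
    refine ⟨fun hf => ?_, fun hf => (Commute.zpow_right hf r : Commute f (g ^ r))⟩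
    obtain ⟨l, rfl⟩ := comm_mem hE hr hf.symm
    obtain ⟨k, rfl⟩ := self_mem hE
    have := hK.1.2.2.1 k (root j hg) r hr
    have hl : l ∈ Subgroup.centralizer ({k ^ r} : Set K) := by
      rw [Subgroup.mem_centralizer_singleton_iff]
      apply hj
      simpa using hf
    rw [this, Subgroup.mem_centralizer_singleton_iff] at hl
    rw [← map_mul, hl, map_mul]
  · obtain ⟨K, _, j, hj, hK, hE⟩ := h g (ne_one hg)
    obtain ⟨l, rfl⟩ := hE f r s hr hs hf
    obtain ⟨k, rfl⟩ := self_mem hE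
    exact hK.1.2.2.2 k (root j hg) l r s hr hs (hj (by simpa using hf))
  · have hne : g ≠ 1 := by
      rintro rfl
      exact hg ⟨1, 2, one_lt_two, one_pow 2⟩
    obtain ⟨K, _, j, hj, hK, hE⟩ := h g hne
    refine le_antisymm (fun f hf => ?_) (Subgroup.zpowers_le.2 ?_)
    · rw [Subgroup.mem_centralizer_singleton_iff] at hf
      obtain ⟨l, rfl⟩ := comm_mem hE one_ne_zero (by simpa using hf.symm)
      obtain ⟨k, rfl⟩ := self_mem hE
      have hl : l ∈ Subgroup.centralizer ({k} : Set K) := by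
        rw [Subgroup.mem_centralizer_singleton_iff]
        exact hj (by simpa using hf)
      rw [hK.2 k fun ⟨v, n, hn, hv⟩ => hg ⟨j v, n, hn, by rw [← map_pow, hv]⟩] at hl
      obtain ⟨z, rfl⟩ := Subgroup.mem_zpowers_iff.1 hl
      exact Subgroup.mem_zpowers_iff.2 ⟨z, (map_zpow j k z).symm⟩
    · rw [Subgroup.mem_centralizer_singleton_iff]

theorem ClassD0.of_mulEquiv {K : Type v} {P : Type u} [Group K] [Group P] (hK : ClassD0 K)
    (e : K ≃* P) : ClassD0 P :=
  ClassD0.of_forall_ne_one fun _ _ => ⟨K, _, e.toMonoidHom, e.injective, hK,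
    fun f _ _ _ _ _ => ⟨e.symm f, e.apply_symm_apply f⟩⟩

theorem ClassD0.zpow_eq_one_iff {K : Type u} [Group K] (hK : ClassD0 K) {g : K} {r : ℤ}
    (hr : r ≠ 0) : g ^ r = 1 ↔ g = 1 :=
  ⟨fun h => hK.1.1 g 1 r hr (by rw [h, one_zpow]), fun h => by rw [h, one_zpow]⟩

theorem classD0_multiplicative_int : ClassD0 (Multiplicative ℤ) := by
  have pow_inj {g : Multiplicative ℤ} (hg : NoPrimeRoot g) {r s : ℤ} (h : g ^ r = g ^ s) :
      r = s := by
    have hne : g.toAdd ≠ 0 := by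
      intro h0
      obtain ⟨p, hp, hn⟩ := hg
      exact hn ⟨1, by rw [one_pow]; exact (toAdd_eq_zero.1 h0).symm⟩
    have := congrArg Multiplicative.toAdd h
    simp only [toAdd_zpow, smul_eq_mul] at this
    exact mul_right_cancel₀ hne this
  have cent (g : Multiplicative ℤ) : Subgroup.centralizer ({g} : Set (Multiplicative ℤ)) = ⊤ :=
    Subgroup.centralizer_eq_top_iff_subset.2 fun x _ =>
      Subgroup.mem_center_iff.2 fun y => mul_comm y x
  refine ⟨⟨fun g h r hr hgh => ?_, fun g hg => ?_, fun g hg r hr => by rw [cent, cent],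
    fun g hg f r s hr hs hf => pow_inj hg ?_⟩, fun g hg => ?_⟩
  · have := congrArg Multiplicative.toAdd hgh
    simp only [toAdd_zpow, smul_eq_mul] at this
    exact Multiplicative.toAdd.injective (mul_left_cancel₀ hr this)
  · refine ⟨(AddMonoidHom.toMultiplicative (Int.castAddHom ℚ)).comp (Subgroup.subtype _),
      fun a b hab => Subtype.ext ?_⟩
    exact Multiplicative.toAdd.injective (Int.cast_injective (α := ℚ) hab)
  · rw [← hf, mul_comm f⁻¹, inv_mul_cancel_right]
  · rw [cent, eq_comm, Subgroup.eq_top_iff']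
    have hunit : g.toAdd.natAbs = 1 := by
      by_contra hne
      rcases Nat.lt_or_ge 1 g.toAdd.natAbs with hlt | hle
      · refine hg ⟨Multiplicative.ofAdd g.toAdd.sign, g.toAdd.natAbs, hlt, ?_⟩
        rw [← ofAdd_nsmul, nsmul_eq_mul, mul_comm, Int.sign_mul_natAbs, ofAdd_toAdd]
      · have h0 : g.toAdd = 0 := by omega
        exact hg ⟨1, 2, one_lt_two, by rw [one_pow]; exact (toAdd_eq_zero.1 h0).symm⟩
    intro x
    refine Subgroup.mem_zpowers_iff.2 ⟨x.toAdd * g.toAdd, Multiplicative.toAdd.injective ?_⟩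
    rw [toAdd_zpow, smul_eq_mul, mul_assoc]
    rcases Int.natAbs_eq_iff.1 hunit with h | h <;> simp [h]

theorem classD0_zpowers {P : Type u} [Group P] {c : P} (hc : ∀ n : ℤ, c ^ n = 1 → n = 0) :
    ClassD0 (Subgroup.zpowers c) :=
  classD0_multiplicative_int.of_mulEquiv
    (MonoidHom.ofInjective (f := zpowersHom P c) ((injective_iff_map_eq_one _).2 fun a ha =>
      toAdd_eq_zero.1 (hc _ (by simpa using ha))))

end ClassD0

section Alternating

variable {P : Type*} [Group P] {F : Bool → Subgroup P} {B : Subgroup P}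

/-- `Alternating F B i n h` states that `h` is, up to an element of `B`, a product of `n` syllables
taken alternately from `F i \ B` and `F (!i) \ B`, starting with `F i \ B`. -/
inductive Alternating (F : Bool → Subgroup P) (B : Subgroup P) : Bool → ℕ → P → Prop
  | base {i : Bool} {b : P} : b ∈ B → Alternating F B i 0 b
  | cons {i : Bool} {n : ℕ} {s h : P} : s ∈ F i → s ∉ B → Alternating F B (!i) n h →
      Alternating F B i (n + 1) (s * h)

/-- `P` is the internal free product of `F true` and `F false` amalgamating `B`. -/
structure IsInternalAmalgam (F : Bool → Subgroup P) (B : Subgroup P) : Prop where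
  le : ∀ i, B ≤ F i
  unique : ∀ {i j : Bool} {n m : ℕ} {h : P}, Alternating F B i n h → Alternating F B j m h →
    n = m ∧ (n ≠ 0 → i = j)
  closure_eq_top : Subgroup.closure ((F true : Set P) ∪ F false) = ⊤

theorem Bool.not_iterate_two_mul (i : Bool) (n : ℕ) : not^[2 * n] i = i := by
  rw [Function.iterate_mul, show not^[2] = id from funext Bool.not_not, Function.iterate_id, id]

theorem Bool.not_iterate_two_mul_add_one (i : Bool) (n : ℕ) : not^[2 * n + 1] i = !i := by
  rw [Function.iterate_succ_apply, Bool.not_iterate_two_mul]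

namespace Alternating

variable {i : Bool} {m n : ℕ} {h k b s : P}

theorem mem_of_zero (H : Alternating F B i 0 h) : h ∈ B := by
  cases H; assumption

theorem exists_cons (H : Alternating F B i (n + 1) h) :
    ∃ s h', s ∈ F i ∧ s ∉ B ∧ Alternating F B (!i) n h' ∧ h = s * h' := by
  cases H with
  | cons hs hsB H => exact ⟨_, _, hs, hsB, H, rfl⟩

theorem single (hs : s ∈ F i) (hsB : s ∉ B) : Alternating F B i 1 s := by
  simpa using cons hs hsB (base B.one_mem)

theorem base_mul (hF : ∀ i, B ≤ F i) (hb : b ∈ B) (H : Alternating F B i n h) :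
    Alternating F B i n (b * h) := by
  cases H with
  | base hh => exact base (B.mul_mem hb hh)
  | cons hs hsB H =>
    rw [← mul_assoc]
    exact cons ((F i).mul_mem (hF i hb) hs) (by rwa [B.mul_mem_cancel_left hb]) H

theorem mul_base (hb : b ∈ B) (H : Alternating F B i n h) : Alternating F B i n (h * b) := by
  induction H with
  | base hh => exact base (B.mul_mem hh hb)
  | cons hs hsB _ ih =>
    rw [mul_assoc]
    exact cons hs hsB ih

theorem append (hF : ∀ i, B ≤ F i) (H : Alternating F B i m h)
    (K : Alternating F B (not^[m] i) n k) : Alternating F B i (m + n) (h * k) := by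
  induction H with
  | base hh =>
    rw [zero_add]
    exact base_mul hF hh K
  | cons hs hsB _ ih =>
    rw [mul_assoc, Nat.add_right_comm]
    exact cons hs hsB (ih K)

theorem concat (hF : ∀ i, B ≤ F i) (H : Alternating F B i n h) (hs : s ∈ F (not^[n] i))
    (hsB : s ∉ B) : Alternating F B i (n + 1) (h * s) :=
  H.append hF (single hs hsB)

theorem exists_concat (H : Alternating F B i (n + 1) h) (hF : ∀ i, B ≤ F i) :
    ∃ h' s, Alternating F B i n h' ∧ s ∈ F (not^[n] i) ∧ s ∉ B ∧ h = h' * s := by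
  induction n generalizing i h with
  | zero =>
    obtain ⟨s, b, hs, hsB, hb, rfl⟩ := H.exists_cons
    exact ⟨1, s * b, base B.one_mem, (F i).mul_mem hs (hF i hb.mem_of_zero),
      by rwa [B.mul_mem_cancel_right hb.mem_of_zero], (one_mul _).symm⟩
  | succ n ih =>
    obtain ⟨t, h', ht, htB, H', rfl⟩ := H.exists_cons
    obtain ⟨h'', s, H'', hs, hsB, rfl⟩ := ih H'
    exact ⟨t * h'', s, cons ht htB H'', hs, hsB, (mul_assoc _ _ _).symm⟩

theorem append_even (hF : ∀ i, B ≤ F i) (H : Alternating F B i (2 * m) h)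
    (K : Alternating F B i n k) : Alternating F B i (2 * m + n) (h * k) :=
  H.append hF (by rwa [Bool.not_iterate_two_mul])

theorem pow_even (hF : ∀ i, B ≤ F i) (H : Alternating F B i (2 * n) h) (r : ℕ) :
    Alternating F B i (2 * (n * r)) (h ^ r) := by
  induction r with
  | zero => rw [pow_zero]; exact base B.one_mem
  | succ r ih =>
    rw [pow_succ', Nat.mul_succ, Nat.add_comm, Nat.mul_add]
    exact H.append_even hF ih

end Alternating

/-- `h` is an alternating product of at most `n` syllables. -/
def Short (F : Bool → Subgroup P) (B : Subgroup P) (n : ℕ) (h : P) : Prop :=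
  ∃ i m, m ≤ n ∧ Alternating F B i m h

namespace Short

variable {i : Bool} {m n : ℕ} {h k s : P}

theorem syllable_mul (hF : ∀ i, B ≤ F i) (hs : s ∈ F i) (H : Short F B n h) :
    Short F B (n + 1) (s * h) := by
  obtain ⟨j, m, hm, H⟩ := H
  by_cases hsB : s ∈ B
  · exact ⟨j, m, by omega, H.base_mul hF hsB⟩
  by_cases hij : j = !i
  · subst hij
    exact ⟨i, m + 1, by omega, .cons hs hsB H⟩
  obtain rfl : j = i := by simpa using hij
  cases H with
  | base hb => exact ⟨j, 1, by omega, .cons hs hsB (.base hb)⟩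
  | @cons _ m t h' ht htB H =>
    rw [← mul_assoc]
    by_cases hst : s * t ∈ B
    · exact ⟨!j, m, by omega, H.base_mul hF hst⟩
    · exact ⟨j, m + 1, by omega, .cons ((F j).mul_mem hs ht) hst H⟩

theorem mul (hF : ∀ i, B ≤ F i) (H : Short F B m h) (K : Short F B n k) :
    Short F B (m + n) (h * k) := by
  obtain ⟨i, l, hl, H⟩ := H
  suffices Short F B (l + n) (h * k) by
    obtain ⟨j, q, hq, Q⟩ := this
    exact ⟨j, q, by omega, Q⟩
  clear hl
  induction H with
  | base hb =>
    obtain ⟨j, q, hq, Q⟩ := K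
    exact ⟨j, q, by omega, Q.base_mul hF hb⟩
  | cons hs _ _ ih =>
    rw [mul_assoc, Nat.add_right_comm]
    exact ih.syllable_mul hF hs

theorem of_mem (hF : ∀ i, B ≤ F i) (hs : s ∈ F i) : Short F B 1 s := by
  simpa using syllable_mul hF hs ⟨true, 0, le_rfl, .base B.one_mem⟩

theorem inv (hF : ∀ i, B ≤ F i) (H : Short F B n h) : Short F B n h⁻¹ := by
  obtain ⟨i, l, hl, H⟩ := H
  suffices Short F B l h⁻¹ by
    obtain ⟨j, q, hq, Q⟩ := this
    exact ⟨j, q, by omega, Q⟩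
  clear hl
  induction H with
  | @base i b hb => exact ⟨i, 0, le_rfl, .base (B.inv_mem hb)⟩
  | @cons i _ _ _ hs _ _ ih =>
    rw [mul_inv_rev]
    exact ih.mul hF (of_mem hF ((F i).inv_mem hs))

end Short

namespace IsInternalAmalgam

variable (hA : IsInternalAmalgam F B) {i : Bool} {m n : ℕ} {g h c f s : P}
include hA

theorem not_alternating_not (H : Alternating F B i n h) (hn : n ≠ 0) :
    ¬ Alternating F B (!i) m h := fun K => by
  simpa using (hA.unique H K).2 hn

theorem le_of_short (H : Alternating F B i n h) (K : Short F B m h) : n ≤ m := by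
  obtain ⟨j, l, hl, L⟩ := K
  rwa [(hA.unique H L).1]

theorem mem_base (hs : s ∈ F i) (hs' : s ∈ F (!i)) : s ∈ B := by
  by_contra hsB
  exact hA.not_alternating_not (.single hs hsB) one_ne_zero (.single hs' hsB)

@[elab_as_elim]
theorem induction_left {motive : P → Prop} (one : motive 1)
    (mul : ∀ (i : Bool) (s h : P), s ∈ F i → motive h → motive (s * h)) (h : P) : motive h := by
  have hh : h ∈ Subgroup.closure ((F true : Set P) ∪ F false) := by
    rw [hA.closure_eq_top]; trivial
  induction hh using Subgroup.closure_induction_left with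
  | one => exact one
  | mul_left x hx y _ hy => exact hx.elim (mul true x y · hy) (mul false x y · hy)
  | inv_mul_cancel x hx y _ hy =>
    exact hx.elim (fun hx => mul true _ y (inv_mem hx) hy) (fun hx => mul false _ y (inv_mem hx) hy)

theorem exists_short (h : P) : ∃ n, Short F B n h := by
  induction h using hA.induction_left with
  | one => exact ⟨0, true, 0, le_rfl, .base B.one_mem⟩
  | mul i s h hs ih => exact ih.imp' _ fun _ H => H.syllable_mul hA.le hs

/-- The double coset decomposition of `P` with respect to a factor. -/
theorem mem_or_exists_double_coset (i : Bool) (f : P) :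
    f ∈ F i ∨ ∃ p q k f', p ∈ F i ∧ q ∈ F i ∧ Alternating F B (!i) (2 * k + 1) f' ∧
      f = p * f' * q := by
  induction f using hA.induction_left with
  | one => exact .inl (F i).one_mem
  | mul j s h hs ih =>
    by_cases hji : j = i
    · subst hji
      rcases ih with hh | ⟨p, q, k, f', hp, hq, H, rfl⟩
      · exact .inl ((F j).mul_mem hs hh)
      · exact .inr ⟨s * p, q, k, f', (F j).mul_mem hs hp, hq, H, by simp only [mul_assoc]⟩
    obtain rfl : j = !i := Bool.eq_not.2 hji
    by_cases hsB : s ∈ B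
    · have hsi := hA.le i hsB
      rcases ih with hh | ⟨p, q, k, f', hp, hq, H, rfl⟩
      · exact .inl ((F i).mul_mem hsi hh)
      · exact .inr ⟨s * p, q, k, f', (F i).mul_mem hsi hp, hq, H, by simp only [mul_assoc]⟩
    rcases ih with hh | ⟨p, q, k, f', hp, hq, H, rfl⟩
    · exact .inr ⟨1, h, 0, s, (F i).one_mem, hh, .single hs hsB, by rw [one_mul]⟩
    by_cases hpB : p ∈ B
    · obtain ⟨t, f'', ht, htB, H', hpf⟩ := (H.base_mul hA.le hpB).exists_cons
      rw [hpf]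
      by_cases hst : s * t ∈ B
      · cases k with
        | zero =>
          refine .inl ?_
          rw [← mul_assoc, ← mul_assoc]
          exact (F i).mul_mem ((F i).mul_mem (hA.le i hst) (hA.le i H'.mem_of_zero)) hq
        | succ k =>
          obtain ⟨v, f3, hv, hvB, H3, rfl⟩ := H'.exists_cons
          rw [Bool.not_not] at hv
          exact .inr ⟨s * t * v, q, k, f3, (F i).mul_mem (hA.le i hst) hv, hq,
            by simpa using H3, by simp only [mul_assoc]⟩
      · exact .inr ⟨1, q, k, s * t * f'', (F i).one_mem, hq,
          .cons ((F (!i)).mul_mem hs ht) hst H', by simp only [mul_assoc, one_mul]⟩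
    · refine .inr ⟨1, q, k + 1, s * (p * f'), (F i).one_mem, hq, .cons hs hsB ?_,
        by simp only [mul_assoc, one_mul]⟩
      rw [Bool.not_not]
      exact .cons hp hpB H

/-- An element intertwining two elements of `F i` that are not conjugate into `B` lies in `F i`. -/
theorem mem_of_intertwines {x y : P} (hx : x ∈ F i) (hxB : ∀ a ∈ F i, a⁻¹ * x * a ∉ B)
    (hy : y ∈ F i) (hyB : ∀ a ∈ F i, a⁻¹ * y * a ∉ B) (hf : x * f = f * y) : f ∈ F i := by
  rcases hA.mem_or_exists_double_coset i f with hfi | ⟨p, q, k, f', hp, hq, H, rfl⟩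
  · exact hfi
  exfalso
  have hf' : (p⁻¹ * x * p) * f' = f' * (q * y * q⁻¹) :=
    calc (p⁻¹ * x * p) * f' = p⁻¹ * (x * (p * f' * q)) * q⁻¹ := by group
      _ = f' * (q * y * q⁻¹) := by rw [hf]; group
  have hx' : p⁻¹ * x * p ∈ F i := mul_mem (mul_mem (inv_mem hp) hx) hp
  have hy' : q * y * q⁻¹ ∈ F i := mul_mem (mul_mem hq hy) (inv_mem hq)
  refine hA.not_alternating_not (.cons hx' (hxB p hp) H) (Nat.succ_ne_zero _) (hf' ▸
    H.concat hA.le ?_ ?_)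
  · rwa [Bool.not_iterate_two_mul_add_one, Bool.not_not]
  · simpa using hyB q⁻¹ (inv_mem hq)

/-- If `B` is malnormal in `F true` and `F false` is commutative, then an element intertwining two
non-trivial elements of `F false` lies in `F false`. -/
theorem mem_false_of_intertwines (hcomm : ∀ x ∈ F false, ∀ y ∈ F false, x * y = y * x)
    (hmal : ∀ a ∈ F true, a ∉ B → ∀ b ∈ B, a⁻¹ * b * a ∈ B → b = 1) {x y : P}
    (hx : x ∈ F false) (hx1 : x ≠ 1) (hy : y ∈ F false) (hf : x * f = f * y) : f ∈ F false := by
  rcases hA.mem_or_exists_double_coset false f with hfi | ⟨p, q, k, f', hp, hq, H, rfl⟩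
  · exact hfi
  exfalso
  have hf' : x * f' = f' * y :=
    calc x * f' = p⁻¹ * (p * x) * f' := by group
      _ = p⁻¹ * (x * (p * f' * q)) * q⁻¹ := by rw [hcomm p hp x hx]; group
      _ = f' * (q * y) * q⁻¹ := by rw [hf]; group
      _ = f' * y := by rw [hcomm q hq y hy]; group
  rw [Bool.not_false] at H
  by_cases hxB : x ∈ B
  · obtain ⟨a, f'', ha, haB, H', rfl⟩ := H.exists_cons
    have haF : a⁻¹ * x * a ∈ F true := mul_mem (mul_mem (inv_mem ha) (hA.le _ hxB)) ha
    have hf'' : (a⁻¹ * x * a) * f'' = f'' * y :=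
      calc (a⁻¹ * x * a) * f'' = a⁻¹ * (x * (a * f'')) := by group
        _ = f'' * y := by rw [hf']; group
    have haB' : a⁻¹ * x * a ∉ B := fun h => hx1 (hmal a ha haB x hxB h)
    have hyB : y ∉ B := fun hyB =>
      absurd (hA.unique (.cons haF haB' H') (hf'' ▸ H'.mul_base hyB)).1 (Nat.succ_ne_self _)
    cases k with
    | zero =>
      refine haB' (hA.mem_base haF ?_)
      rw [eq_mul_inv_of_mul_eq hf'']
      have := hA.le false H'.mem_of_zero
      exact mul_mem (mul_mem this hy) (inv_mem this)
    | succ k =>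
      refine hA.not_alternating_not (.cons haF haB' H') (Nat.succ_ne_zero _)
        (hf'' ▸ H'.concat hA.le ?_ hyB)
      rwa [Bool.not_iterate_two_mul]
  · have K := Alternating.cons (i := false) hx hxB H
    rw [hf'] at K
    by_cases hyB : y ∈ B
    · exact hA.not_alternating_not (H.mul_base hyB) (Nat.succ_ne_zero _) K
    · refine hA.not_alternating_not (H.concat hA.le ?_ hyB) (Nat.succ_ne_zero _) K
      rwa [Bool.not_iterate_two_mul_add_one]

/-- Cancellation of a common prefix. -/
theorem alternating_inv_mul {k l p q : ℕ} {w w' : P} (C : Alternating F B i k c)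
    (H : Alternating F B i l h) (hkl : k ≤ l) (W : Alternating F B (not^[k] i) p w)
    (W' : Alternating F B (not^[l] i) q w') (hw : c * w = h * w') :
    Alternating F B (not^[k] i) (l - k) (c⁻¹ * h) := by
  induction C generalizing l h with
  | base hb => exact H.base_mul hA.le (B.inv_mem hb)
  | @cons i k s c hs hsB C ih =>
    obtain ⟨l, rfl⟩ : ∃ l', l = l' + 1 := ⟨l - 1, by omega⟩
    obtain ⟨t, h', ht, htB, H', rfl⟩ := H.exists_cons
    have hw' : c * w = s⁻¹ * t * (h' * w') :=
      calc c * w = s⁻¹ * (s * c * w) := by group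
        _ = s⁻¹ * t * (h' * w') := by rw [hw]; group
    have hst : s⁻¹ * t ∈ B := by
      by_contra hst
      refine hA.not_alternating_not
        (.cons ((F i).mul_mem ((F i).inv_mem hs) ht) hst (H'.append hA.le W'))
        (Nat.succ_ne_zero _) (hw' ▸ C.append hA.le W)
    have := ih (H'.base_mul hA.le hst) (by omega) W W' (by rw [hw', mul_assoc _ h' w'])
    rwa [Nat.add_sub_add_right, show (s * c)⁻¹ * (t * h') = c⁻¹ * (s⁻¹ * t * h') by group]

end IsInternalAmalgam

/-- Every element is conjugate to an element of a factor or to a cyclically reduced product. -/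
def ConjFactorOrEven (F : Bool → Subgroup P) (B : Subgroup P) (g : P) : Prop :=
  ∃ c h, g = c * h * c⁻¹ ∧ ((∃ i, h ∈ F i) ∨ ∃ n, n ≠ 0 ∧ Alternating F B true (2 * n) h)

theorem ConjFactorOrEven.conj {g : P} (H : ConjFactorOrEven F B g) (c : P) :
    ConjFactorOrEven F B (c * g * c⁻¹) := by
  obtain ⟨d, h, rfl, H⟩ := H
  exact ⟨c * d, h, by group, H⟩

theorem ConjFactorOrEven.of_even (hF : ∀ i, B ≤ F i) {i : Bool} {n : ℕ} {h : P}
    (H : Alternating F B i (2 * n) h) : ConjFactorOrEven F B h := by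
  cases n with
  | zero => exact ⟨1, h, by group, .inl ⟨true, hF true H.mem_of_zero⟩⟩
  | succ n =>
    cases i with
    | true => exact ⟨1, h, by group, .inr ⟨n + 1, Nat.succ_ne_zero _, H⟩⟩
    | false =>
      rw [Nat.mul_succ] at H
      obtain ⟨s, h', hs, hsB, H', rfl⟩ := H.exists_cons
      refine ⟨s, h' * s, by group, .inr ⟨n + 1, Nat.succ_ne_zero _, H'.concat hF ?_ hsB⟩⟩
      change s ∈ F (not^[2 * n + 1] true)
      rwa [Bool.not_iterate_two_mul_add_one]

theorem ConjFactorOrEven.of_odd (hF : ∀ i, B ≤ F i) {i : Bool} {n : ℕ} {h : P}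
    (H : Alternating F B i (2 * n + 1) h) : ConjFactorOrEven F B h := by
  induction n generalizing i h with
  | zero =>
    obtain ⟨s, b, hs, -, hb, rfl⟩ := H.exists_cons
    exact ⟨1, s * b, by group, .inl ⟨i, (F i).mul_mem hs (hF i hb.mem_of_zero)⟩⟩
  | succ n ih =>
    rw [Nat.mul_succ] at H
    obtain ⟨s, h', hs, hsB, H', rfl⟩ := H.exists_cons
    obtain ⟨h'', t, H'', ht, htB, rfl⟩ := H'.exists_concat hF
    rw [Bool.not_iterate_two_mul_add_one, Bool.not_not] at ht
    have key : ConjFactorOrEven F B (h'' * (t * s)) := by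
      by_cases hts : t * s ∈ B
      · exact ih (H''.mul_base hts)
      · refine of_even hF (n := n + 1) (H''.concat hF ?_ hts)
        change t * s ∈ F (not^[2 * n + 1] !i)
        rw [Bool.not_iterate_two_mul_add_one, Bool.not_not]
        exact (F i).mul_mem ht hs
    convert key.conj s using 1
    group

namespace IsInternalAmalgam

variable (hA : IsInternalAmalgam F B) {n : ℕ} {g c f b : P}
include hA

theorem conjFactorOrEven (g : P) : ConjFactorOrEven F B g := by
  obtain ⟨n, i, m, -, H⟩ := hA.exists_short g
  rcases Nat.even_or_odd' m with ⟨k, rfl | rfl⟩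
  · exact .of_even hA.le H
  · exact .of_odd hA.le H

variable (hn : n ≠ 0) (hg : Alternating F B true (2 * n) g)

include hg in
theorem short_zpow (j : ℤ) : Short F B (2 * (n * j.natAbs)) (g ^ j) := by
  have := hg.pow_even hA.le j.natAbs
  rcases Int.natAbs_eq j with hj | hj
  · rw [hj, zpow_natCast, Int.natAbs_natCast]
    exact ⟨_, _, le_rfl, this⟩
  · rw [hj, zpow_neg, zpow_natCast, Int.natAbs_neg, Int.natAbs_natCast]
    exact Short.inv hA.le ⟨_, _, le_rfl, this⟩

include hg in
theorem le_of_short_zpow {m : ℕ} {j : ℤ} (h : Short F B m (g ^ j)) :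
    2 * (n * j.natAbs) ≤ m := by
  have := hg.pow_even hA.le j.natAbs
  rcases Int.natAbs_eq j with hj | hj
  · rw [hj, zpow_natCast] at h
    exact hA.le_of_short this h
  · rw [hj, zpow_neg, zpow_natCast] at h
    exact hA.le_of_short this (by simpa using h.inv hA.le)

include hn hg in
theorem eq_zero_of_zpow_eq_one {j : ℤ} (h : g ^ j = 1) : j = 0 := by
  have := hA.le_of_short_zpow hg (m := 0) (j := j) (h ▸ ⟨true, 0, le_rfl, .base B.one_mem⟩)
  simpa [hn] using this

include hn hg in
theorem natAbs_le_of_conj_zpow {r s : ℤ} (h : f⁻¹ * g ^ r * f = g ^ s) :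
    s.natAbs ≤ r.natAbs := by
  obtain ⟨p, hp⟩ := hA.exists_short f
  by_contra! hlt
  have hk : f⁻¹ * g ^ (r * ((2 * p + 1 : ℕ) : ℤ)) * f = g ^ (s * ((2 * p + 1 : ℕ) : ℤ)) := by
    rw [zpow_mul, zpow_mul, ← h]
    simpa using (conj_zpow (i := ((2 * p + 1 : ℕ) : ℤ)) (a := f⁻¹) (b := g ^ r)).symm
  have := hA.le_of_short_zpow hg
    (hk ▸ ((hp.inv hA.le).mul hA.le (hA.short_zpow hg _)).mul hA.le hp)
  rw [Int.natAbs_mul, Int.natAbs_mul, Int.natAbs_natCast] at this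
  obtain ⟨d, hd⟩ := Nat.exists_eq_add_of_lt hlt
  obtain ⟨e, rfl⟩ := Nat.exists_eq_succ_of_ne_zero hn
  rw [hd] at this
  nlinarith [Nat.zero_le (e * (d + 1) * (2 * p + 1)), Nat.zero_le (d * (2 * p + 1))]

/-- Only the trivial element of `B` commutes with a power of a cyclically reduced element. -/
theorem eq_one_of_commute (hmal : ∀ a ∈ F true, a ∉ B → ∀ b ∈ B, a⁻¹ * b * a ∈ B → b = 1)
    (hn : n ≠ 0) (hg : Alternating F B true (2 * n) g) (hb : b ∈ B) (hbg : Commute b g) :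
    b = 1 := by
  obtain ⟨n, rfl⟩ := Nat.exists_eq_succ_of_ne_zero hn
  obtain ⟨a, h, ha, haB, H, rfl⟩ := hg.exists_cons
  refine hmal a ha haB b hb (by_contra fun hab => ?_)
  have hbh : a⁻¹ * b * a * h = h * b :=
    calc a⁻¹ * b * a * h = a⁻¹ * (b * (a * h)) := by group
      _ = h * b := by rw [hbg.eq]; group
  exact hA.not_alternating_not
    (.cons (mul_mem (mul_mem (inv_mem ha) (hA.le _ hb)) ha) hab H) (Nat.succ_ne_zero _)
    (hbh ▸ H.mul_base hb)

include hn hg in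
theorem exists_mul_pow_eq (c : P) : ∃ (M : ℕ) (x z : P) (l : ℕ), x ∈ F false ∧
    Alternating F B true (2 * l) z ∧ c * g ^ M = x * z := by
  induction c using hA.induction_left with
  | one => exact ⟨0, 1, 1, 0, one_mem _, .base B.one_mem, by simp⟩
  | mul i s h hs ih =>
    obtain ⟨M, x, z, l, hx, hz, hM⟩ := ih
    cases i with
    | false => exact ⟨M, s * x, z, l, mul_mem hs hx, hz, by rw [mul_assoc, hM, mul_assoc]⟩
    | true =>
      by_cases hsB : s ∈ B
      · exact ⟨M, s * x, z, l, mul_mem (hA.le _ hsB) hx, hz, by rw [mul_assoc, hM, mul_assoc]⟩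
      by_cases hxB : x ∈ B
      · obtain ⟨l', hl'⟩ : ∃ l', l + n = l' + 1 := ⟨l + n - 1, by omega⟩
        have hzg := (hz.append_even hA.le hg).base_mul hA.le hxB
        rw [← Nat.mul_add, hl'] at hzg
        obtain ⟨t, z', ht, htB, hz', hzt⟩ := hzg.exists_cons
        have hM' : s * h * g ^ (M + 1) = s * t * z' := by
          rw [mul_assoc s t, ← hzt, pow_succ, mul_assoc, ← mul_assoc h, hM]
          simp only [mul_assoc]
        by_cases hst : s * t ∈ B
        · obtain ⟨y, w, hy, hyB, hw, rfl⟩ := hz'.exists_cons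
          exact ⟨M + 1, s * t * y, w, l', mul_mem (hA.le _ hst) hy, hw, by
            rw [hM', mul_assoc (s * t)]⟩
        · exact ⟨M + 1, 1, s * t * z', l' + 1, one_mem _, .cons (mul_mem hs ht) hst hz',
            by rw [hM', one_mul]⟩
      · exact ⟨M, 1, s * (x * z), l + 1, one_mem _, .cons hs hsB (.cons hx hxB hz),
          by rw [mul_assoc, hM, one_mul]⟩

include hn hg in
theorem exists_alternating_mul_pow {r : ℕ} (hr : r ≠ 0) (hc : Commute c (g ^ r)) :
    ∃ M l, Alternating F B true (2 * l) (c * g ^ M) := by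
  obtain ⟨M, x, z, l, hx, hz, hM⟩ := hA.exists_mul_pow_eq hn hg c
  refine ⟨M, l, hM ▸ hz.base_mul hA.le (by_contra fun hxB => ?_)⟩
  have hcomm : x * (z * g ^ r) = g ^ r * (x * z) := by
    rw [← mul_assoc, ← hM]
    exact (hc.mul_left (Commute.pow_pow_self g M r)).eq
  obtain ⟨q, hq⟩ : ∃ q, 2 * (n * r) = q + 1 :=
    Nat.exists_eq_succ_of_ne_zero (mul_ne_zero two_ne_zero (mul_ne_zero hn hr))
  have hgr := hg.pow_even hA.le r
  obtain ⟨h', y, hh', hy, -, hgy⟩ := (hq ▸ hgr).exists_concat hA.le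
  obtain ⟨q', rfl⟩ : ∃ q', q = 2 * q' + 1 := ⟨q / 2, by omega⟩
  rw [Bool.not_iterate_two_mul_add_one, Bool.not_true] at hy
  have hshort : Short F B (2 * q' + 1 + (2 * l + 1)) (g ^ r * (x * z)) := by
    rw [hgy, show h' * y * (x * z) = h' * (y * x * z) by simp only [mul_assoc]]
    exact Short.mul hA.le ⟨_, _, le_rfl, hh'⟩
      (Short.syllable_mul hA.le (mul_mem hy hx) ⟨_, _, le_rfl, hz⟩)
  have := hA.le_of_short (.cons (i := false) hx hxB (hz.append_even hA.le hgr)) (hcomm ▸ hshort)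
  omega

include hn hg in
theorem alternating_inv_mul_of_commute {k l r : ℕ} {h : P} (hr : r ≠ 0)
    (hc : Commute c (g ^ r)) (hh : Commute h (g ^ r)) (C : Alternating F B true (2 * k) c)
    (H : Alternating F B true (2 * l) h) (hkl : k ≤ l) :
    Alternating F B true (2 * (l - k)) (c⁻¹ * h) := by
  have hpos : 0 < n * r := Nat.pos_of_ne_zero (mul_ne_zero hn hr)
  have hG := (hg.pow_even hA.le r).pow_even hA.le l
  have hl : l ≤ n * r * l := Nat.le_mul_of_pos_left l hpos
  have suffix {d : P} {j : ℕ} (hd : Commute d (g ^ r)) (D : Alternating F B true (2 * j) d)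
      (hj : j ≤ l) : ∃ p, Alternating F B true p (d⁻¹ * (g ^ r) ^ l) := by
    have := hA.alternating_inv_mul D hG (by omega)
      (by rw [Bool.not_iterate_two_mul]; exact hG) (by rw [Bool.not_iterate_two_mul]; exact D)
      (hd.pow_right l).eq
    rw [Bool.not_iterate_two_mul] at this
    exact ⟨_, this⟩
  obtain ⟨p, hp⟩ := suffix hc C hkl
  obtain ⟨q, hq⟩ := suffix hh H le_rfl
  have := hA.alternating_inv_mul C H (by omega)
    (by rw [Bool.not_iterate_two_mul]; exact hp) (by rw [Bool.not_iterate_two_mul]; exact hq)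
    (by rw [mul_inv_cancel_left, mul_inv_cancel_left])
  rwa [Bool.not_iterate_two_mul, ← Nat.mul_sub] at this

include hn hg in
/-- The elements commuting with some power of a cyclically reduced element form a cyclic group. -/
theorem exists_commute_mem_zpowers
    (hmal : ∀ a ∈ F true, a ∉ B → ∀ b ∈ B, a⁻¹ * b * a ∈ B → b = 1) :
    ∃ d, ∀ (c : P) (r : ℕ), r ≠ 0 → Commute c (g ^ r) → c ∈ Subgroup.zpowers d := by
  classical
  have hex : ∃ k, k ≠ 0 ∧ ∃ (c : P) (r : ℕ), r ≠ 0 ∧ Commute c (g ^ r) ∧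
      Alternating F B true (2 * k) c := ⟨n, hn, g, 1, one_ne_zero, by simp, hg⟩
  obtain ⟨hk, d, r₀, hr₀, hd, D⟩ := Nat.find_spec hex
  have hmin {l : ℕ} (hl : l < Nat.find hex) := Nat.find_min hex hl
  generalize Nat.find hex = k at *
  have key (l : ℕ) : ∀ (c : P) (r : ℕ), r ≠ 0 → Commute c (g ^ r) →
      Alternating F B true (2 * l) c → c ∈ Subgroup.zpowers d := by
    induction l using Nat.strong_induction_on with
    | _ l ih =>
      intro c r hr hc C
      rcases eq_or_ne l 0 with rfl | hl
      · rw [hA.eq_one_of_commute hmal (mul_ne_zero hn hr) (hg.pow_even hA.le r) C.mem_of_zero hc]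
        exact one_mem _
      have hkl : k ≤ l := not_lt.1 fun hlt => hmin hlt ⟨hl, c, r, hr, hc, C⟩
      have hd' : Commute d (g ^ (r₀ * r)) := by rw [pow_mul]; exact hd.pow_right r
      have hc' : Commute c (g ^ (r₀ * r)) := by rw [mul_comm, pow_mul]; exact hc.pow_right r₀
      have := ih (l - k) (by omega) (d⁻¹ * c) (r₀ * r) (mul_ne_zero hr₀ hr)
        (hd'.inv_left.mul_left hc')
        (hA.alternating_inv_mul_of_commute hn hg (mul_ne_zero hr₀ hr) hd' hc' D C hkl)
      rwa [Subgroup.mul_mem_cancel_left _ (inv_mem (Subgroup.mem_zpowers d))] at this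
  have hgd : g ∈ Subgroup.zpowers d := key n g 1 one_ne_zero (by simp) hg
  refine ⟨d, fun c r hr hc => ?_⟩
  obtain ⟨M, l, H⟩ := hA.exists_alternating_mul_pow hn hg hr hc
  have := key l (c * g ^ M) r hr (hc.mul_left (Commute.pow_pow_self g M r)) H
  rwa [Subgroup.mul_mem_cancel_right _ (pow_mem hgd M)] at this

end IsInternalAmalgam

/-- `g` has a subgroup in `ClassD0` containing every element that conjugates a non-trivial power of
`g` to a non-trivial power of `g`. -/
def PowerControlled (g : P) : Prop :=
  ∃ S : Subgroup P, ClassD0 S ∧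
    ∀ (f : P) (r s : ℤ), r ≠ 0 → s ≠ 0 → f⁻¹ * g ^ r * f = g ^ s → f ∈ S

theorem PowerControlled.conj {g : P} (hg : PowerControlled g) (c : P) :
    PowerControlled (c * g * c⁻¹) := by
  obtain ⟨S, hS, hE⟩ := hg
  refine ⟨S.map (MulAut.conj c).toMonoidHom,
    hS.of_mulEquiv (S.equivMapOfInjective _ (MulAut.conj c).injective),
    fun f r s hr hs hf => ⟨c⁻¹ * f * c, hE _ r s hr hs ?_, ?_⟩⟩
  · rw [conj_zpow, conj_zpow] at hf
    calc (c⁻¹ * f * c)⁻¹ * g ^ r * (c⁻¹ * f * c)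
        = c⁻¹ * (f⁻¹ * (c * g ^ r * c⁻¹) * f) * c := by group
      _ = g ^ s := by rw [hf]; group
  · simp only [MulEquiv.toMonoidHom_eq_coe, MonoidHom.coe_coe, MulAut.conj_apply]
    group

namespace IsInternalAmalgam

variable (hA : IsInternalAmalgam F B) {n : ℕ} {g f : P}
include hA

theorem eq_one_of_zpow_eq_one (hF : ∀ i, ClassD0 (F i)) {j : ℤ} (hj : j ≠ 0) (hg : g ^ j = 1) :
    g = 1 := by
  obtain ⟨c, h, rfl, H⟩ := hA.conjFactorOrEven g
  rw [conj_zpow, conj_eq_one_iff] at hg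
  rw [conj_eq_one_iff]
  rcases H with ⟨i, hi⟩ | ⟨n, hn, H⟩
  · have := ((hF i).zpow_eq_one_iff (g := ⟨h, hi⟩) hj).1 (Subtype.ext hg)
    exact congrArg Subtype.val this
  · exact absurd (hA.eq_zero_of_zpow_eq_one hn H hg) hj

theorem powerControlled_of_alternating (hF : ∀ i, ClassD0 (F i))
    (hmal : ∀ a ∈ F true, a ∉ B → ∀ b ∈ B, a⁻¹ * b * a ∈ B → b = 1)
    (hn : n ≠ 0) (hg : Alternating F B true (2 * n) g) : PowerControlled g := by
  obtain ⟨d, hd⟩ := hA.exists_commute_mem_zpowers hn hg hmal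
  have hd' (c : P) (r : ℤ) (hr : r ≠ 0) (hc : Commute c (g ^ r)) : c ∈ Subgroup.zpowers d := by
    refine hd c r.natAbs (Int.natAbs_ne_zero.2 hr) ?_
    rcases Int.natAbs_eq r with h | h
    · rwa [h, zpow_natCast] at hc
    · rw [h, zpow_neg, zpow_natCast] at hc
      exact Commute.inv_right_iff.1 hc
  obtain ⟨b, hb⟩ := Subgroup.mem_zpowers_iff.1 (hd' g 1 one_ne_zero (by simp))
  refine ⟨Subgroup.zpowers d, classD0_zpowers fun k hk => ?_, fun f r s hr hs hf => ?_⟩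
  · refine hA.eq_zero_of_zpow_eq_one hn hg (j := k) ?_
    rw [← hb, zpow_comm, hk, one_zpow]
  have hrs : s.natAbs = r.natAbs := by
    refine le_antisymm (hA.natAbs_le_of_conj_zpow hn hg hf)
      (hA.natAbs_le_of_conj_zpow hn hg (f := f⁻¹) ?_)
    rw [← hf]
    group
  have hf' : g ^ r * f = f * g ^ s := by rw [← hf]; group
  rcases Int.natAbs_eq_natAbs_iff.1 hrs with rfl | rfl
  · exact hd' f s hs hf'.symm
  exfalso
  have hinv : g ^ (-r) * f = f * g ^ r := by
    rw [zpow_neg, inv_mul_eq_iff_eq_mul, ← mul_assoc, hf', zpow_neg, inv_mul_cancel_right]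
  have hsq : Commute (f * f) (g ^ r) := by
    rw [Commute, SemiconjBy, mul_assoc, ← hinv, ← mul_assoc, ← hf', mul_assoc]
  obtain ⟨a, ha⟩ := Subgroup.mem_zpowers_iff.1 (hd' _ r hr hsq)
  have hfa : (f * f) ^ b = g ^ a := by rw [← ha, ← hb, zpow_comm]
  have hcomm : Commute f (g ^ a) := hfa ▸ ((Commute.refl f).mul_right (Commute.refl f)).zpow_right b
  have hga : g ^ (r * a) = g ^ (-r * a) :=
    calc g ^ (r * a) = f⁻¹ * g ^ (r * a) * f := by
          rw [mul_assoc, mul_comm r a, zpow_mul, ← (hcomm.zpow_right r).eq, inv_mul_cancel_left]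
      _ = (f⁻¹ * g ^ r * f) ^ a := by
          rw [zpow_mul]; simpa using (conj_zpow (i := a) (a := f⁻¹) (b := g ^ r)).symm
      _ = g ^ (-r * a) := by rw [hf, zpow_mul]
  have h2 : 2 * (r * a) = 0 := hA.eq_zero_of_zpow_eq_one hn hg (by
    rw [two_mul, zpow_add]
    nth_rewrite 2 [hga]
    rw [neg_mul, zpow_neg, mul_inv_cancel])
  have ha0 : a = 0 := by simpa [hr] using h2
  rw [ha0, zpow_zero] at ha
  have hf1 : f = 1 := hA.eq_one_of_zpow_eq_one hF (two_ne_zero (α := ℤ)) (by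
    rw [zpow_two, ha])
  rw [hf1, mul_one, one_mul] at hf'
  have := hA.eq_zero_of_zpow_eq_one hn hg (j := r + r) (by
    rw [zpow_add]
    nth_rewrite 2 [hf']
    rw [zpow_neg, mul_inv_cancel])
  omega

theorem classD0 (hF : ∀ i, ClassD0 (F i))
    (hcomm : ∀ x ∈ F false, ∀ y ∈ F false, x * y = y * x)
    (hmal : ∀ a ∈ F true, a ∉ B → ∀ b ∈ B, a⁻¹ * b * a ∈ B → b = 1)
    (hroot : ∀ g ∈ F true, ∀ r : ℤ, r ≠ 0 → g ^ r ∈ B → g ∈ B) : ClassD0 P := by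
  have intertwines {g f : P} {r s : ℤ} (h : f⁻¹ * g ^ r * f = g ^ s) : g ^ r * f = f * g ^ s := by
    rw [← h]; group
  have hfalse {g : P} (hg1 : g ≠ 1) (hg : g ∈ F false) : PowerControlled g :=
    ⟨F false, hF false, fun f r s hr hs hf => hA.mem_false_of_intertwines hcomm hmal
      (zpow_mem hg r) (fun h => hg1 (hA.eq_one_of_zpow_eq_one hF hr h)) (zpow_mem hg s)
      (intertwines hf)⟩
  refine ClassD0.of_forall_ne_one fun g hg1 => ?_
  suffices PowerControlled g by
    obtain ⟨S, hS, hE⟩ := this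
    exact ⟨S, inferInstance, S.subtype, S.subtype_injective, hS, by simpa using hE⟩
  obtain ⟨c, h, rfl, H⟩ := hA.conjFactorOrEven g
  rw [ne_eq, conj_eq_one_iff] at hg1
  refine PowerControlled.conj ?_ c
  rcases H with ⟨_ | _, hh⟩ | ⟨n, hn, H⟩
  · exact hfalse hg1 hh
  · by_cases hB : ∃ a ∈ F true, a⁻¹ * h * a ∈ B
    · obtain ⟨a, ha, hB⟩ := hB
      have := (hfalse (fun h1 => hg1 ?_) (hA.le false hB)).conj a
      · simpa [mul_assoc] using this
      · simpa using (conj_eq_one_iff (a := a⁻¹) (b := h)).1 (by simpa using h1)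
    · have hpow (r : ℤ) (hr : r ≠ 0) (a : P) (ha : a ∈ F true) : a⁻¹ * h ^ r * a ∉ B := by
        intro hmem
        refine hB ⟨a, ha, hroot _ (mul_mem (mul_mem (inv_mem ha) hh) ha) r hr ?_⟩
        have := conj_zpow (i := r) (a := a⁻¹) (b := h)
        rw [inv_inv] at this
        rwa [this]
      exact ⟨F true, hF true, fun f r s hr hs hf => hA.mem_of_intertwines
        (zpow_mem hh r) (hpow r hr) (zpow_mem hh s) (hpow s hs) (intertwines hf)⟩
  · exact hA.powerControlled_of_alternating hF hmal hn H

end IsInternalAmalgam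

end Alternating

section Pushout

open Monoid PushoutI

variable {K : Bool → Type*} {H P : Type*} [∀ i, Group (K i)] [Group H] [Group P]
  {φ : ∀ i, H →* K i} {j : ∀ i, K i →* P} {k : H →* P}

theorem Alternating.exists_normalWord (d : NormalWord.Transversal φ)
    (hj : ∀ i, (j i).comp (φ i) = k) {e : P →* PushoutI φ} (he : ∀ i x, e (j i x) = of i x)
    {i : Bool} {n : ℕ} {p : P}
    (hp : Alternating (fun i => (j i).range) k.range i n p) :
    ∃ w : NormalWord d, w.prod = e p ∧ w.toList.map Sigma.fst = List.iterate not i n := by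
  have hk (y : H) : e (k y) = PushoutI.base φ y := by
    rw [← hj true, MonoidHom.comp_apply, he, of_apply_eq_base]
  induction hp with
  | base hb =>
    obtain ⟨y, rfl⟩ := hb
    refine ⟨⟨.empty, y, by simp [CoprodI.Word.empty]⟩, ?_, rfl⟩
    simp [NormalWord.prod, hk]
  | @cons i n s p hs hsB _ ih =>
    obtain ⟨x, rfl⟩ := hs
    obtain ⟨w, hw, hl⟩ := ih
    have hx : x ∉ (φ i).range := by
      rintro ⟨y, rfl⟩
      exact hsB ⟨y, by rw [← hj i, MonoidHom.comp_apply]⟩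
    have hfst : w.fstIdx ≠ some i := by
      rw [CoprodI.Word.fstIdx, ← List.head?_map, hl]
      cases n <;> simp
    refine ⟨.cons x w hfst hx, ?_, ?_⟩
    · rw [NormalWord.prod_cons, map_mul, he, hw]
    · simp [NormalWord.cons, CoprodI.Word.cons, hl]

theorem isInternalAmalgam_of_pushoutI (hφ : ∀ i, Function.Injective (φ i))
    (hj : ∀ i, (j i).comp (φ i) = k) {e : P →* PushoutI φ} (he : ∀ i x, e (j i x) = of i x)
    (hgen : Subgroup.closure (((j true).range : Set P) ∪ (j false).range) = ⊤) :
    IsInternalAmalgam (fun i => (j i).range) k.range where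
  le i := by
    rintro _ ⟨y, rfl⟩
    exact ⟨φ i y, DFunLike.congr_fun (hj i) y⟩
  unique := by
    intro i₁ i₂ n₁ n₂ p h₁ h₂
    obtain ⟨d⟩ := NormalWord.transversal_nonempty φ hφ
    obtain ⟨w₁, hw₁, hl₁⟩ := h₁.exists_normalWord d hj he
    obtain ⟨w₂, hw₂, hl₂⟩ := h₂.exists_normalWord d hj he
    obtain rfl := NormalWord.prod_injective (hw₁.trans hw₂.symm)
    have hl := hl₁.symm.trans hl₂
    have hn : n₁ = n₂ := by simpa using congrArg List.length hl
    subst hn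
    refine ⟨rfl, fun hn => ?_⟩
    obtain ⟨n, rfl⟩ := Nat.exists_eq_succ_of_ne_zero hn
    exact (List.cons.inj hl).1
  closure_eq_top := hgen

end Pushout

section RootAdjunction

variable {G : Type u} [Group G]

/-- The two factors `G` and `⟨x⟩`, in the same universe. -/
def RootFactor (G : Type u) : Bool → Type u
  | true => G
  | false => ULift.{u} (Multiplicative ℤ)

instance (i : Bool) : Group (RootFactor G i) :=
  match i with
  | true => inferInstanceAs (Group G)
  | false => inferInstanceAs (Group (ULift (Multiplicative ℤ)))

/-- A pair of homomorphisms out of `ULift ⟨x⟩` and `G`, as a family. -/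
def rootFactorLift {Q : Type*} [Group Q] (f : G →* Q) (g : Multiplicative ℤ →* Q) :
    ∀ i, RootFactor G i →* Q
  | true => f
  | false => g.comp MulEquiv.ulift.toMonoidHom

/-- The embeddings of the amalgamated subgroup. -/
def rootFactorMap (u : G) (m : ℤ) : ∀ i, Multiplicative ℤ →* RootFactor G i
  | true => zpowersHom G u
  | false => MulEquiv.ulift.symm.toMonoidHom.comp
      (zpowersHom (Multiplicative ℤ) (Multiplicative.ofAdd m))

theorem rootFactorMap_injective {u : G} (hu : ∀ n : ℤ, u ^ n = 1 → n = 0) {m : ℤ} (hm : m ≠ 0)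
    (i : Bool) : Function.Injective (rootFactorMap u m i) := by
  cases i with
  | true =>
    exact (injective_iff_map_eq_one (zpowersHom G u)).2 fun a ha => toAdd_eq_zero.1 (hu _ ha)
  | false =>
    refine MulEquiv.ulift.symm.injective.comp ((injective_iff_map_eq_one _).2 fun a ha => ?_)
    have := congrArg Multiplicative.toAdd ha
    simp only [zpowersHom_apply, toAdd_zpow, toAdd_ofAdd, smul_eq_mul, toAdd_one, mul_eq_zero, hm,
      or_false] at this
    exact toAdd_eq_zero.1 this

theorem Indivisible.noPrimeRoot {u : G} (hu : Indivisible u) : NoPrimeRoot u :=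
  ⟨2, Nat.prime_two, fun ⟨v, hv⟩ => hu ⟨v, 2, one_lt_two, hv⟩⟩

theorem Indivisible.eq_zero_of_zpow_eq_one (hG : ClassD0 G) {u : G} (hu : Indivisible u) (n : ℤ)
    (h : u ^ n = 1) : n = 0 := by
  by_contra hn
  exact hu ⟨1, 2, one_lt_two, by rw [one_pow, (hG.zpow_eq_one_iff hn).1 h]⟩

theorem ClassD0.mem_zpowers_of_commute (hG : ClassD0 G) {u : G} (hu : Indivisible u) {r : ℤ}
    (hr : r ≠ 0) {a : G} (h : a * u ^ r = u ^ r * a) : a ∈ Subgroup.zpowers u := by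
  rw [← hG.2 u hu, ← hG.1.2.2.1 u hu.noPrimeRoot r hr]
  exact Subgroup.mem_centralizer_singleton_iff.2 h

theorem ClassD0.eq_one_of_conj_mem_zpowers (hG : ClassD0 G) {u : G} (hu : Indivisible u) {a b : G}
    (ha : a ∉ Subgroup.zpowers u) (hb : b ∈ Subgroup.zpowers u)
    (hab : a⁻¹ * b * a ∈ Subgroup.zpowers u) : b = 1 := by
  obtain ⟨r, rfl⟩ := Subgroup.mem_zpowers_iff.1 hb
  obtain ⟨s, hs⟩ := Subgroup.mem_zpowers_iff.1 hab
  by_contra hne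
  have hr : r ≠ 0 := by rintro rfl; exact hne (zpow_zero u)
  have hs0 : s ≠ 0 := by
    rintro rfl
    refine hne ?_
    rw [zpow_zero] at hs
    simpa using (conj_eq_one_iff (a := a⁻¹) (b := u ^ r)).1 (by simpa using hs.symm)
  obtain rfl := hG.1.2.2.2 u hu.noPrimeRoot a r s hr hs0 hs.symm
  refine ha (hG.mem_zpowers_of_commute hu hr ?_)
  nth_rewrite 1 [hs]
  group

theorem ClassD0.mem_zpowers_of_zpow_mem (hG : ClassD0 G) {u : G} (hu : Indivisible u) {g : G}
    {r : ℤ} (hr : r ≠ 0) (h : g ^ r ∈ Subgroup.zpowers u) : g ∈ Subgroup.zpowers u := by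
  obtain ⟨s, hs⟩ := Subgroup.mem_zpowers_iff.1 h
  rcases eq_or_ne s 0 with rfl | hs0
  · rw [zpow_zero] at hs
    rw [(hG.zpow_eq_one_iff hr).1 hs.symm]
    exact one_mem _
  · refine hG.mem_zpowers_of_commute hu hs0 ?_
    rw [hs, ← zpow_one_add, ← zpow_add_one, add_comm]

theorem IsAmalgamatedFreeProduct.closure_eq_top {H : Type w} {A : Type u} {B : Type v}
    {P : Type (max u v w)} [Group H] [Group A] [Group B] [Group P] {φ : H →* A} {ψ : H →* B}
    {ja : A →* P} {jb : B →* P} (hP : IsAmalgamatedFreeProduct φ ψ ja jb) :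
    Subgroup.closure ((ja.range : Set P) ∪ jb.range) = ⊤ := by
  set S := Subgroup.closure ((ja.range : Set P) ∪ jb.range)
  have ha (x : A) : ja x ∈ S := Subgroup.subset_closure (.inl ⟨x, rfl⟩)
  have hb (x : B) : jb x ∈ S := Subgroup.subset_closure (.inr ⟨x, rfl⟩)
  obtain ⟨t, ⟨hta, htb⟩, -⟩ := hP.2 S (ja.codRestrict S ha) (jb.codRestrict S hb)
    (MonoidHom.ext fun x => Subtype.ext (DFunLike.congr_fun hP.1 x))
  have hid : S.subtype.comp t = MonoidHom.id P :=
    (hP.2 P ja jb hP.1).unique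
      ⟨by rw [MonoidHom.comp_assoc, hta]; rfl, by rw [MonoidHom.comp_assoc, htb]; rfl⟩ ⟨rfl, rfl⟩
  refine (Subgroup.eq_top_iff' S).2 fun x => ?_
  have := DFunLike.congr_fun hid x
  rw [MonoidHom.id_apply] at this
  rw [← this]
  exact (t x).2

theorem IsAmalgamatedFreeProduct.exists_toPushoutI {u : G} {m : ℤ} {P : Type u} [Group P]
    {jG : G →* P} {jx : Multiplicative ℤ →* P}
    (hP : IsAmalgamatedFreeProduct (zpowersHom G u)
      (zpowersHom (Multiplicative ℤ) (Multiplicative.ofAdd m)) jG jx) :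
    ∃ e : P →* Monoid.PushoutI (rootFactorMap u m), ∀ i y,
      e (rootFactorLift jG jx i y) = Monoid.PushoutI.of (φ := rootFactorMap u m) i y := by
  let f : G →* Monoid.PushoutI (rootFactorMap u m) :=
    Monoid.PushoutI.of (φ := rootFactorMap u m) true
  let g : Multiplicative ℤ →* Monoid.PushoutI (rootFactorMap u m) :=
    (Monoid.PushoutI.of (φ := rootFactorMap u m) false).comp MulEquiv.ulift.symm.toMonoidHom
  have hfg : f.comp (zpowersHom G u) =
      g.comp (zpowersHom (Multiplicative ℤ) (Multiplicative.ofAdd m)) := by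
    ext
    exact (Monoid.PushoutI.of_apply_eq_base (rootFactorMap u m) true _).trans
      (Monoid.PushoutI.of_apply_eq_base (rootFactorMap u m) false _).symm
  obtain ⟨e, he, -⟩ := hP.2 (Monoid.PushoutI (rootFactorMap u m)) f g hfg
  refine ⟨e, fun i y => ?_⟩
  cases i with
  | true => exact DFunLike.congr_fun he.1 y
  | false => exact DFunLike.congr_fun he.2 (MulEquiv.ulift y)

end RootAdjunction

/-- **Corollary 6.2.** If `G ∈ 𝒟₀`, `u ∈ G` is indivisible, and `m ≠ 0`, then the free
product with amalgamation `H = G *_{(u = xᵐ)} ⟨x⟩` is also in `𝒟₀`.  The amalgamated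
product is any pushout `P` of `ℤ → G, 1 ↦ u` and `ℤ → ℤ = ⟨x⟩, 1 ↦ m`. -/
theorem classD0_of_amalgamated_root_adjunction
    {G : Type u} [Group G] (hG : ClassD0 G)
    (u : G) (hu : Indivisible u)
    (m : ℤ) (hm : m ≠ 0)
    {P : Type u} [Group P] (jG : G →* P) (jx : Multiplicative ℤ →* P)
    (hP : IsAmalgamatedFreeProduct (zpowersHom G u)
      (zpowersHom (Multiplicative ℤ) (Multiplicative.ofAdd m)) jG jx) :
    ClassD0 P := by
  have hu0 := hu.eq_zero_of_zpow_eq_one hG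
  have hφ := rootFactorMap_injective hu0 hm
  obtain ⟨e, he⟩ := hP.exists_toPushoutI
  have hinj (i : Bool) : Function.Injective (rootFactorLift jG jx i) := fun y z hyz =>
    Monoid.PushoutI.of_injective hφ i (by rw [← he, ← he, hyz])
  have hrange : (rootFactorLift jG jx false).range = jx.range :=
    SetLike.coe_injective (MulEquiv.ulift.surjective.range_comp jx)
  have hrange' : (rootFactorLift jG jx true).range = jG.range := rfl
  have hA := isInternalAmalgam_of_pushoutI (j := rootFactorLift jG jx) hφ
    (k := jG.comp (zpowersHom G u))
    (fun i => match i with | true => rfl | false => hP.1.symm) he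
    (by rw [hrange]; exact hP.closure_eq_top)
  have hB (g : G) : jG g ∈ (jG.comp (zpowersHom G u)).range ↔ g ∈ Subgroup.zpowers u := by
    constructor
    · rintro ⟨y, hy⟩
      exact Subgroup.mem_zpowers_iff.2 ⟨y.toAdd, hinj true hy⟩
    · rintro ⟨n, rfl⟩
      exact ⟨Multiplicative.ofAdd n, by simp⟩
  refine hA.classD0 (fun i => ?_) ?_ ?_ ?_
  · refine ClassD0.of_mulEquiv (K := RootFactor G i) ?_ (MonoidHom.ofInjective (hinj i))
    cases i with
    | true => exact hG
    | false => exact classD0_multiplicative_int.of_mulEquiv MulEquiv.ulift.symm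
  · rw [hrange]
    rintro _ ⟨y, rfl⟩ _ ⟨z, rfl⟩
    rw [← map_mul, mul_comm, map_mul]
  · rw [hrange']
    rintro _ ⟨a, rfl⟩ ha _ ⟨b, rfl⟩ hab
    rw [hB] at ha
    rw [MonoidHom.comp_apply, ← map_inv, ← map_mul, ← map_mul, hB] at hab
    rw [MonoidHom.comp_apply,
      hG.eq_one_of_conj_mem_zpowers hu (b := zpowersHom G u b) ha ⟨b.toAdd, rfl⟩ hab, map_one]
  · rw [hrange']
    rintro _ ⟨g, rfl⟩ r hr hg
    rw [← map_zpow, hB] at hg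
    exact (hB g).2 (hG.mem_zpowers_of_zpow_mem hu hr hg)
end

section
/- Let p be a prime and let G be a finitely generated group that is residually a finite p-group. Let u be an element of G of infinite order whose centralizer in G is exactly ⟨u⟩. Then for every integer n ≥ 0, the free product with amalgamation H = G *_{(u = x^{p^n})} ⟨x⟩ is residually a finite p-group. -/
universe u v w x

/-- A group is residually a finite `p`-group. -/
def IsResiduallyFinitePGroup (p : ℕ) (G : Type*) [Group G] : Prop :=
  ∀ g : G, g ≠ 1 → ∃ N : Subgroup G, ∃ _ : N.Normal, g ∉ N ∧
    Finite (G ⧸ N) ∧ IsPGroup p (G ⧸ N)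

/-- Pairs `(θ, g)` such that `θ` agrees with `ρ g` up to an element of `J`. -/
def unipotentExtension {S Q : Type*} [Ring S] [Group Q] [Finite S] [Finite Q] (ρ : Q →* S)
    (J : NonUnitalSubring S) (hl : ∀ g, ∀ x ∈ J, ρ g * x ∈ J) (hr : ∀ g, ∀ x ∈ J, x * ρ g ∈ J) :
    Subgroup (Sˣ × Q) :=
  let T : Submonoid (Sˣ × Q) :=
    { carrier := {z | (z.1 : S) - ρ z.2 ∈ J}
      one_mem' := by simp
      mul_mem' := by
        intro a b ha hb
        have key : ((a * b).1 : S) - ρ (a * b).2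
            = ((a.1 : S) - ρ a.2) * ((b.1 : S) - ρ b.2) + ρ a.2 * ((b.1 : S) - ρ b.2)
              + ((a.1 : S) - ρ a.2) * ρ b.2 := by
          simp only [Prod.fst_mul, Prod.snd_mul, Units.val_mul, map_mul]
          noncomm_ring
        rw [Set.mem_ofPred_eq, key]
        exact J.add_mem (J.add_mem (J.mul_mem ha hb) (hl _ _ hb)) (hr _ _ ha) }
  { T with
    inv_mem' := by
      intro a ha
      have h : a⁻¹ ∈ Submonoid.powers a :=
        (isOfFinOrder_of_finite a).mem_powers_iff_mem_zpowers.2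
          (inv_mem (Subgroup.mem_zpowers a))
      exact (Submonoid.powers_le (P := T)).2 ha h }

theorem mem_unipotentExtension {S Q : Type*} [Ring S] [Group Q] [Finite S] [Finite Q]
    {ρ : Q →* S} {J : NonUnitalSubring S} {hl : ∀ g, ∀ x ∈ J, ρ g * x ∈ J}
    {hr : ∀ g, ∀ x ∈ J, x * ρ g ∈ J} {z : Sˣ × Q} :
    z ∈ unipotentExtension ρ J hl hr ↔ (z.1 : S) - ρ z.2 ∈ J := Iff.rfl

theorem isPGroup_unipotentExtension {p : ℕ} [Fact p.Prime] {S Q : Type*} [Ring S] [CharP S p]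
    [Group Q] [Finite S] [Finite Q] {ρ : Q →* S} {J : NonUnitalSubring S}
    {hl : ∀ g, ∀ x ∈ J, ρ g * x ∈ J} {hr : ∀ g, ∀ x ∈ J, x * ρ g ∈ J}
    (hQ : IsPGroup p Q) {k : ℕ} (hJ : ∀ x ∈ J, x ^ k = 0) :
    IsPGroup p (unipotentExtension ρ J hl hr) := by
  rw [isPGroup_iff_pow_pow_eq_one] at hQ ⊢
  intro z
  obtain ⟨a, ha⟩ := hQ (z : Sˣ × Q).2
  have hmem := (z ^ p ^ a).2
  rw [mem_unipotentExtension] at hmem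
  have h2 : ((z ^ p ^ a : unipotentExtension ρ J hl hr) : Sˣ × Q).2 = 1 := by simpa using ha
  rw [h2, map_one] at hmem
  refine ⟨a + k, ?_⟩
  rw [pow_add, pow_mul]
  set w := z ^ p ^ a with hw
  have hk : k ≤ p ^ k := (Nat.lt_pow_self (Fact.out : p.Prime).one_lt).le
  apply Subtype.ext
  apply Prod.ext
  · apply Units.ext
    have h1 : ((w : Sˣ × Q).1 : S) = (((w : Sˣ × Q).1 : S) - 1) + 1 := by abel
    have : ((w : Sˣ × Q).1 : S) ^ p ^ k = 1 := by
      rw [h1, add_pow_char_pow_of_commute _ _ (Commute.one_right _), one_pow,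
        pow_eq_zero_of_le hk (hJ _ hmem), zero_add]
    simpa using this
  · have : (w : Sˣ × Q).2 ^ p ^ k = 1 := by rw [h2, one_pow]
    simpa using this

section LayeredRepresentation

/-- Functions on `M + 1` disjoint copies of `Q` with values in `𝔽_p`. -/
abbrev Layered (p M : ℕ) (Q : Type u) : Type u := Fin (M + 1) → Q → ZMod p

/-- Left translation by `Q` on every layer. -/
def layeredTranslation (p M : ℕ) (Q : Type u) [Group Q] :
    Q →* Module.End (ZMod p) (Layered p M Q) where
  toFun g :=
    { toFun := fun f i r => f i (g⁻¹ * r)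
      map_add' := fun _ _ => rfl
      map_smul' := fun _ _ => rfl }
  map_one' := by ext; simp
  map_mul' a b := by
    refine LinearMap.ext fun f => ?_
    funext i r
    simp [mul_assoc]

theorem layeredTranslation_apply {p M : ℕ} {Q : Type u} [Group Q] (g : Q) (f : Layered p M Q)
    (i : Fin (M + 1)) (r : Q) : layeredTranslation p M Q g f i r = f i (g⁻¹ * r) := rfl

open Classical in
/-- The operator moving, for each `j`, the coset `U * s j` of layer `j` onto the coset `U` of layer
`j + 1` and killing everything else. -/
noncomputable def layeredShift (p M : ℕ) {Q : Type u} [Group Q] (U : Subgroup Q) (s : ℕ → Q) :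
    Module.End (ZMod p) (Layered p M Q) where
  toFun f i r :=
    if 0 < i.val ∧ r ∈ U then f ⟨i.val - 1, by omega⟩ (r * s (i.val - 1)) else 0
  map_add' f g := by
    funext i r
    simp only [Pi.add_apply]
    split_ifs <;> simp
  map_smul' c f := by
    funext i r
    simp only [Pi.smul_apply, RingHom.id_apply]
    split_ifs <;> simp

open Classical in
theorem layeredShift_apply {p M : ℕ} {Q : Type u} [Group Q] (U : Subgroup Q) (s : ℕ → Q)
    (f : Layered p M Q) (i : Fin (M + 1)) (r : Q) :
    layeredShift p M U s f i r =
      if 0 < i.val ∧ r ∈ U then f ⟨i.val - 1, by omega⟩ (r * s (i.val - 1)) else 0 := rfl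

/-- Operators that raise the filtration by layers. -/
def layerRaising (p M : ℕ) (Q : Type u) :
    NonUnitalSubring (Module.End (ZMod p) (Layered p M Q)) where
  carrier := {N | ∀ (f : Layered p M Q) (j : ℕ), (∀ i, i.val < j → f i = 0) →
    ∀ i, i.val < j + 1 → N f i = 0}
  zero_mem' := fun _ _ _ _ _ => rfl
  add_mem' := fun {a b} ha hb f j hf i hi => by simp [ha f j hf i hi, hb f j hf i hi]
  neg_mem' := fun {a} ha f j hf i hi => by simp [ha f j hf i hi]
  mul_mem' := fun {a b} ha hb f j hf i hi =>
    ha (b f) j (fun i hi => hb f j hf i (by omega)) i hi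

theorem layerRaising_pow_eq_zero {p M : ℕ} {Q : Type u}
    {N : Module.End (ZMod p) (Layered p M Q)} (hN : N ∈ layerRaising p M Q) :
    N ^ (M + 1) = 0 := by
  have h : ∀ (k : ℕ) (f : Layered p M Q) (i : Fin (M + 1)), i.val < k → (N ^ k) f i = 0 := by
    intro k
    induction k with
    | zero => intro f i hi; omega
    | succ k ih =>
      intro f i hi
      rw [pow_succ', Module.End.mul_apply]
      exact hN _ k (fun i hi => ih f i hi) i hi
  exact LinearMap.ext fun f => funext fun i => h _ f i i.isLt

theorem layeredTranslation_mul_mem {p M : ℕ} {Q : Type u} [Group Q] (g : Q)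
    (x : Module.End (ZMod p) (Layered p M Q)) (hx : x ∈ layerRaising p M Q) :
    layeredTranslation p M Q g * x ∈ layerRaising p M Q := by
  intro f j hf i hi
  funext r
  exact congrFun (hx f j hf i hi) _

theorem mul_layeredTranslation_mem {p M : ℕ} {Q : Type u} [Group Q] (g : Q)
    (x : Module.End (ZMod p) (Layered p M Q)) (hx : x ∈ layerRaising p M Q) :
    x * layeredTranslation p M Q g ∈ layerRaising p M Q := by
  intro f j hf i hi
  exact hx (layeredTranslation p M Q g f) j (fun i hi => funext fun r => congrFun (hf i hi) _) i hi

theorem layeredShift_mem {p M : ℕ} {Q : Type u} [Group Q] (U : Subgroup Q) (s : ℕ → Q) :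
    layeredShift p M U s ∈ layerRaising p M Q := by
  intro f j hf i hi
  funext r
  rw [layeredShift_apply]
  split_ifs with h
  · exact congrFun (hf ⟨i.val - 1, by omega⟩ (by change i.val - 1 < j; omega)) _
  · rfl

theorem layeredShift_mul_self {p M : ℕ} {Q : Type u} [Group Q] {U : Subgroup Q} {s : ℕ → Q}
    (hs : ∀ j, 1 ≤ j → j < M → s j ∉ U) :
    layeredShift p M U s * layeredShift p M U s = 0 := by
  refine LinearMap.ext fun f => funext fun i => funext fun r => ?_
  rw [Module.End.mul_apply, layeredShift_apply, layeredShift_apply]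
  split_ifs with h h'
  · exact absurd ((U.mul_mem_cancel_left h.2).1 h'.2) (hs _ h'.1 (by omega))
  · rfl
  · rfl

theorem commute_layeredShift {p M : ℕ} {Q : Type u} [Group Q] {U : Subgroup Q} (s : ℕ → Q)
    {g : Q} (hg : g ∈ U) :
    Commute (layeredTranslation p M Q g) (layeredShift p M U s) := by
  refine LinearMap.ext fun f => funext fun i => funext fun r => ?_
  change layeredShift p M U s f i (g⁻¹ * r) =
    layeredShift p M U s (layeredTranslation p M Q g f) i r
  by_cases hr : r ∈ U <;>
    simp [layeredShift_apply, layeredTranslation_apply, U.mul_mem_cancel_left (U.inv_mem hg),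
      mul_assoc, hr]

/-- `v` vanishes above layer `j` and is nonzero at the point `r` of layer `j`. -/
def TopLayerAt {p M : ℕ} {Q : Type u} (v : Layered p M Q) (j : ℕ) (r : Q) : Prop :=
  (∀ i : Fin (M + 1), j < i.val → v i = 0) ∧ ∃ h : j < M + 1, v ⟨j, h⟩ r ≠ 0

theorem TopLayerAt.translate {p M : ℕ} {Q : Type u} [Group Q] {v : Layered p M Q} {j : ℕ} {r : Q}
    (hv : TopLayerAt v j r) (g : Q) : TopLayerAt (layeredTranslation p M Q g v) j (g * r) := by
  refine ⟨fun i hi => funext fun r => congrFun (hv.1 i hi) _, hv.2.1, ?_⟩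
  change v _ (g⁻¹ * (g * r)) ≠ 0
  rw [inv_mul_cancel_left]
  exact hv.2.2

theorem layeredShift_apply_of_lt {p M : ℕ} {Q : Type u} [Group Q] {U : Subgroup Q} {s : ℕ → Q}
    {v : Layered p M Q} {j : ℕ} (hv : ∀ i : Fin (M + 1), j < i.val → v i = 0)
    {i : Fin (M + 1)} (hi : j + 1 < i.val) : layeredShift p M U s v i = 0 := by
  funext r
  rw [layeredShift_apply]
  split_ifs with h
  · exact congrFun (hv ⟨i.val - 1, by omega⟩ (by change j < i.val - 1; omega)) _
  · rfl

theorem layeredShift_apply_succ {p M : ℕ} {Q : Type u} [Group Q] {U : Subgroup Q} {s : ℕ → Q}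
    {v : Layered p M Q} {j : ℕ} (hj : j < M) :
    layeredShift p M U s v ⟨j + 1, by omega⟩ 1 = v ⟨j, by omega⟩ (s j) := by
  rw [layeredShift_apply, if_pos ⟨Nat.succ_pos j, U.one_mem⟩]
  simp

theorem TopLayerAt.add_shift {p M : ℕ} {Q : Type u} [Group Q] {U : Subgroup Q} {s : ℕ → Q}
    {v : Layered p M Q} {j : ℕ} (hj : j < M) (hv : TopLayerAt v j (s j)) :
    TopLayerAt ((1 + layeredShift p M U s) v) (j + 1) 1 := by
  refine ⟨fun i hi => ?_, by omega, ?_⟩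
  · rw [LinearMap.add_apply, Pi.add_apply, layeredShift_apply_of_lt hv.1 hi, add_zero]
    exact hv.1 i (by omega)
  · rw [LinearMap.add_apply, Pi.add_apply, Pi.add_apply, layeredShift_apply_succ hj,
      Module.End.one_apply, hv.1 _ (Nat.lt_succ_self j), Pi.zero_apply, zero_add]
    exact hv.2.2

theorem TopLayerAt.sub_shift {p M : ℕ} {Q : Type u} [Group Q] {U : Subgroup Q} {s : ℕ → Q}
    {v : Layered p M Q} {j : ℕ} (hj : j < M) (hv : TopLayerAt v j (s j)) :
    TopLayerAt ((1 - layeredShift p M U s) v) (j + 1) 1 := by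
  refine ⟨fun i hi => ?_, by omega, ?_⟩
  · rw [LinearMap.sub_apply, Pi.sub_apply, layeredShift_apply_of_lt hv.1 hi, sub_zero]
    exact hv.1 i (by omega)
  · rw [LinearMap.sub_apply, Pi.sub_apply, Pi.sub_apply, layeredShift_apply_succ hj,
      Module.End.one_apply, hv.1 _ (Nat.lt_succ_self j), Pi.zero_apply, zero_sub, neg_ne_zero]
    exact hv.2.2

end LayeredRepresentation

/-- The product `b (m - 1) * ⋯ * b 1 * b 0`. -/
def descendingProd {M : Type*} [Monoid M] (b : ℕ → M) : ℕ → M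
  | 0 => 1
  | m + 1 => b m * descendingProd b m

theorem map_descendingProd {M N : Type*} [Monoid M] [Monoid N] (f : M →* N) (b : ℕ → M) (m : ℕ) :
    f (descendingProd b m) = descendingProd (fun i => f (b i)) m := by
  induction m with
  | zero => exact map_one f
  | succ m ih => simp [descendingProd, ih]

theorem descendingProd_congr {M : Type*} [Monoid M] {b b' : ℕ → M} {m : ℕ}
    (h : ∀ i < m, b i = b' i) : descendingProd b m = descendingProd b' m := by
  induction m with
  | zero => rfl
  | succ m ih => rw [descendingProd, descendingProd, h m m.lt_succ_self,
    ih fun i hi => h i (by omega)]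

/-- If `Q` is a finite `p`-group, then `Q` and a conjugate of `Q` by an element `y` centralising `U`
can be mapped into a finite `p`-group in which a given alternating product with inner syllables
outside `U` is nontrivial. -/
theorem exists_twist_descendingProd_ne_one {p : ℕ} [Fact p.Prime] {Q : Type u} [Group Q] [Finite Q]
    (hQ : IsPGroup p Q) (U : Subgroup Q) (a c : ℕ → Q) {m : ℕ} (hm : 0 < m)
    (hc : ∀ i < m, c i ∉ U) (ha : ∀ i < m, 0 < i → a i ∉ U) (g : Q) :
    ∃ (Γ : Type u) (_ : Group Γ) (σ : Q →* Γ) (y : Γ), Finite Γ ∧ IsPGroup p Γ ∧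
      (∀ z ∈ U, Commute (σ z) y) ∧
      σ g * descendingProd (fun i => y * σ (c i) * y⁻¹ * σ (a i)) m ≠ 1 := by
  classical
  set M := 2 * m with hM
  set s : ℕ → Q := fun j => if j % 2 = 0 then a (j / 2) else c (j / 2) with hs
  have hsU : ∀ j, 1 ≤ j → j < M → s j ∉ U := by
    intro j h1 h2
    simp only [hs]
    split_ifs with h
    · exact ha _ (by omega) (by omega)
    · exact hc _ (by omega)
  have hs0 : ∀ i, s (2 * i) = a i := fun i => by simp [hs]
  have hs1 : ∀ i, s (2 * i + 1) = c i := fun i => by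
    simp only [hs]
    rw [if_neg (by omega)]
    congr 1
    omega
  let ρ := layeredTranslation p M Q
  let E := layeredShift p M U s
  have hE : E * E = 0 := layeredShift_mul_self hsU
  have : Finite (Module.End (ZMod p) (Layered p M Q)) :=
    Finite.of_injective (fun f => (f : Layered p M Q → Layered p M Q)) DFunLike.coe_injective
  have : CharP (Module.End (ZMod p) (Layered p M Q)) p :=
    charP_of_injective_algebraMap (algebraMap (ZMod p) _).injective p
  let y : (Module.End (ZMod p) (Layered p M Q))ˣ := ⟨1 + E, 1 - E, by
    simp [mul_sub, add_mul, hE], by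
    simp [mul_add, sub_mul, hE]⟩
  let Γ := unipotentExtension ρ (layerRaising p M Q) layeredTranslation_mul_mem
    mul_layeredTranslation_mem
  let σ : Q →* Γ := ((MonoidHom.toHomUnits ρ).prod (MonoidHom.id Q)).codRestrict Γ fun g => by
    rw [mem_unipotentExtension]
    simp
  let Y : Γ := ⟨(y, 1), by
    rw [mem_unipotentExtension]
    simpa [y] using layeredShift_mem U s⟩
  refine ⟨Γ, inferInstance, σ, Y, inferInstance,
    isPGroup_unipotentExtension hQ fun x hx => layerRaising_pow_eq_zero hx, ?_, ?_⟩
  · intro z hz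
    apply Subtype.ext
    apply Prod.ext
    · apply Units.ext
      exact ((Commute.one_right _).add_right (commute_layeredShift s hz) :
        Commute (ρ z) (1 + E))
    · exact (Commute.one_right z : Commute z 1)
  · let π : Γ →* Module.End (ZMod p) (Layered p M Q) :=
      (Units.coeHom _).comp ((MonoidHom.fst _ Q).comp Γ.subtype)
    let v : Layered p M Q := Pi.single 0 (Pi.single 1 1)
    have hv : TopLayerAt v 0 1 := by
      refine ⟨fun i hi => ?_, by omega, ?_⟩
      · exact Pi.single_eq_of_ne (by rintro rfl; simp at hi) _
      · simp [v]
    have key : ∀ k ≤ m, TopLayerAt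
        (π (descendingProd (fun i => Y * σ (c i) * Y⁻¹ * σ (a i)) k) v) (2 * k) 1 := by
      intro k
      induction k with
      | zero => intro _; simpa [descendingProd] using hv
      | succ k ih =>
        intro hk
        have h0 := (ih (by omega)).translate (a k)
        rw [mul_one, ← hs0] at h0
        have h1 := (h0.sub_shift (U := U) (by omega)).translate (c k)
        rw [mul_one, ← hs1] at h1
        have h2 := h1.add_shift (U := U) (by omega)
        rw [hs0, hs1] at h2
        exact h2
    intro h1
    have h2 := (key m le_rfl).translate g
    have h3 : ρ g (π (descendingProd (fun i => Y * σ (c i) * Y⁻¹ * σ (a i)) m) v) = v := by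
      have := congrArg (fun z => π z v) h1
      exact this
    rw [h3] at h2
    obtain ⟨h, h4⟩ := h2.2
    rw [hv.1 _ (by change 0 < 2 * m; omega)] at h4
    exact h4 rfl

theorem isPGroup_regularWreathProduct {p : ℕ} [Fact p.Prime] {D Q : Type*} [Group D] [Group Q]
    [Finite D] [Finite Q] (hD : IsPGroup p D) (hQ : IsPGroup p Q) : IsPGroup p (D ≀ᵣ Q) := by
  obtain ⟨a, ha⟩ := IsPGroup.iff_card.1 hD
  obtain ⟨b, hb⟩ := IsPGroup.iff_card.1 hQ
  refine IsPGroup.of_card (n := a * p ^ b + b) ?_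
  rw [RegularWreathProduct.card, ha, hb, pow_add, pow_mul]

/-- Roots of `p`-power degree can be adjoined to elements of finite `p`-groups. -/
theorem exists_root_in_finite_pGroup {p : ℕ} [Fact p.Prime] {A : Type u} [Group A] [Finite A]
    (hA : IsPGroup p A) (a : A) (n : ℕ) :
    ∃ (Q : Type u) (_ : Group Q) (α : A →* Q) (x : Q), Finite Q ∧ IsPGroup p Q ∧
      Function.Injective α ∧ x ^ p ^ n = α a ∧
      ∀ k : ℤ, x ^ k ∈ Subgroup.zpowers (α a) → ((p ^ n : ℕ) : ℤ) ∣ k := by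
  have hq : 0 < p ^ n := pow_pos (Fact.out : p.Prime).pos n
  have : NeZero (p ^ n) := ⟨hq.ne'⟩
  let C := Multiplicative (ZMod (p ^ n))
  have : Finite C := inferInstanceAs (Finite (ZMod (p ^ n)))
  have hC : IsPGroup p C := IsPGroup.of_card (n := n) (Nat.card_zmod (p ^ n))
  let α : A →* A ≀ᵣ C :=
    { toFun := fun g => ⟨fun _ => g, 1⟩
      map_one' := rfl
      map_mul' := fun g h => RegularWreathProduct.ext rfl (by simp) }
  let x : A ≀ᵣ C := ⟨fun j => if (Multiplicative.toAdd j).val = 0 then a else 1,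
    Multiplicative.ofAdd 1⟩
  have hright : ∀ k : ℕ, (x ^ k).right = Multiplicative.ofAdd (k : ZMod (p ^ n)) := fun k => by
    rw [← RegularWreathProduct.rightHom_eq_right, map_pow]
    change (Multiplicative.ofAdd (1 : ZMod (p ^ n))) ^ k = _
    rw [← ofAdd_nsmul, nsmul_one]
  have hleft : ∀ k : ℕ, k ≤ p ^ n → ∀ j : C,
      (x ^ k).left j = if (Multiplicative.toAdd j).val < k then a else 1 := by
    intro k
    induction k with
    | zero => intro _ j; simp
    | succ k ih =>
      intro hk j
      have hval : (Multiplicative.toAdd (x.right⁻¹ * j)).val =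
          if (Multiplicative.toAdd j).val = 0 then p ^ n - 1
          else (Multiplicative.toAdd j).val - 1 := by
        change (-1 + (Multiplicative.toAdd j)).val = _
        generalize Multiplicative.toAdd j = z
        split_ifs with hz
        · rw [(ZMod.val_eq_zero z).1 hz, add_zero]
          obtain ⟨r, hr⟩ : ∃ r, p ^ n = r + 1 := ⟨p ^ n - 1, by omega⟩
          rw [hr, ZMod.val_neg_one, Nat.add_sub_cancel]
        · have h1 : -1 + z = ((z.val - 1 : ℕ) : ZMod (p ^ n)) := by
            rw [Nat.cast_sub (by omega), ZMod.natCast_zmod_val]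
            push_cast
            ring
          rw [h1, ZMod.val_cast_of_lt]
          have := ZMod.val_lt z
          omega
      rw [pow_succ', RegularWreathProduct.mul_left, Pi.mul_apply, ih (by omega), hval]
      change (if (Multiplicative.toAdd j).val = 0 then a else 1) * _ = _
      generalize (Multiplicative.toAdd j).val = z
      by_cases hz : z = 0
      · rw [if_pos hz, if_pos hz, if_neg (by omega), if_pos (by omega), mul_one]
      · rw [if_neg hz, if_neg hz, one_mul]
        congr 1
        exact propext (by omega)
  refine ⟨A ≀ᵣ C, inferInstance, α, x, inferInstance, isPGroup_regularWreathProduct hA hC,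
    fun g h hgh => congrFun (congrArg RegularWreathProduct.left hgh) 1, ?_, ?_⟩
  · refine RegularWreathProduct.ext (funext fun j => ?_) ?_
    · rw [hleft _ le_rfl, if_pos (ZMod.val_lt _)]
      rfl
    · rw [hright]
      change Multiplicative.ofAdd (((p ^ n : ℕ) : ZMod (p ^ n))) = 1
      rw [ZMod.natCast_self]
      rfl
  · rintro k ⟨l, hl⟩
    have h := congrArg RegularWreathProduct.rightHom hl
    simp only [map_zpow] at h
    have h1 : RegularWreathProduct.rightHom (α a) = 1 := rfl
    have h2 : RegularWreathProduct.rightHom x = Multiplicative.ofAdd (1 : ZMod (p ^ n)) := rfl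
    rw [h1, h2, one_zpow, ← ofAdd_zsmul, zsmul_one] at h
    exact (ZMod.intCast_zmod_eq_zero_iff_dvd k (p ^ n)).1 (Multiplicative.ofAdd.injective h).symm

/-- Every element of a group generated by two subgroups sharing `U = K` is a product whose inner
syllables lie outside the shared subgroup. -/
theorem exists_descendingProd_eq {A B P : Type*} [Group A] [Group B] [Group P]
    (ja : A →* P) (jb : B →* P) (U : Subgroup A) (K : Subgroup B)
    (hK : ∀ k ∈ K, ∃ v : A, ja v = jb k) (hU : ∀ v ∈ U, ∃ k ∈ K, jb k = ja v)
    (hgen : Subgroup.closure (Set.range ja ∪ Set.range jb) = ⊤) (h : P) :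
    ∃ (m : ℕ) (g : A) (c : ℕ → B) (a : ℕ → A), (∀ i < m, c i ∉ K) ∧ (∀ i < m, 0 < i → a i ∉ U) ∧
      h = ja g * descendingProd (fun i => jb (c i) * ja (a i)) m := by
  have hA : ∀ (x : A) (h : P), (∃ (m : ℕ) (g : A) (c : ℕ → B) (a : ℕ → A),
      (∀ i < m, c i ∉ K) ∧ (∀ i < m, 0 < i → a i ∉ U) ∧
        h = ja g * descendingProd (fun i => jb (c i) * ja (a i)) m) →
      ∃ (m : ℕ) (g : A) (c : ℕ → B) (a : ℕ → A),
        (∀ i < m, c i ∉ K) ∧ (∀ i < m, 0 < i → a i ∉ U) ∧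
          ja x * h = ja g * descendingProd (fun i => jb (c i) * ja (a i)) m := by
    rintro x _ ⟨m, g, c, a, hc, ha, rfl⟩
    exact ⟨m, x * g, c, a, hc, ha, by rw [map_mul, mul_assoc]⟩
  have hB : ∀ (x : B) (h : P), (∃ (m : ℕ) (g : A) (c : ℕ → B) (a : ℕ → A),
      (∀ i < m, c i ∉ K) ∧ (∀ i < m, 0 < i → a i ∉ U) ∧
        h = ja g * descendingProd (fun i => jb (c i) * ja (a i)) m) →
      ∃ (m : ℕ) (g : A) (c : ℕ → B) (a : ℕ → A),
        (∀ i < m, c i ∉ K) ∧ (∀ i < m, 0 < i → a i ∉ U) ∧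
          jb x * h = ja g * descendingProd (fun i => jb (c i) * ja (a i)) m := by
    intro x h hh
    by_cases hx : x ∈ K
    · obtain ⟨v, hv⟩ := hK x hx
      rw [← hv]
      exact hA v h hh
    obtain ⟨m, g, c, a, hc, ha, rfl⟩ := hh
    by_cases hg : 0 < m → g ∉ U
    · refine ⟨m + 1, 1, Function.update c m x, Function.update a m g, ?_, ?_, ?_⟩
      · intro i hi
        rcases eq_or_ne i m with rfl | hne
        · simpa using hx
        · simpa [hne] using hc i (by omega)
      · intro i hi h0
        rcases eq_or_ne i m with rfl | hne
        · simpa using hg h0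
        · simpa [hne] using ha i (by omega) h0
      · rw [descendingProd, descendingProd_congr
          (b := fun i => jb (Function.update c m x i) * ja (Function.update a m g i))
          (b' := fun i => jb (c i) * ja (a i)) fun i hi => by simp [hi.ne]]
        simp [mul_assoc]
    · push Not at hg
      obtain ⟨hm, hg⟩ := hg
      obtain ⟨r, rfl⟩ : ∃ r, m = r + 1 := ⟨m - 1, by omega⟩
      obtain ⟨t, -, ht⟩ := hU g hg
      rw [← ht, descendingProd]
      by_cases hy : x * t * c r ∈ K
      · obtain ⟨v, hv⟩ := hK _ hy
        refine ⟨r, v * a r, c, a, fun i hi => hc i (by omega), fun i hi => ha i (by omega), ?_⟩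
        rw [map_mul, hv]
        simp [mul_assoc]
      · refine ⟨r + 1, 1, Function.update c r (x * t * c r), a, ?_, ha, ?_⟩
        · intro i hi
          rcases eq_or_ne i r with rfl | hne
          · simpa using hy
          · simpa [hne] using hc i hi
        · rw [descendingProd, descendingProd_congr
            (b := fun i => jb (Function.update c r (x * t * c r) i) * ja (a i))
            (b' := fun i => jb (c i) * ja (a i)) fun i hi => by simp [hi.ne]]
          simp [mul_assoc]
  have hmem : h ∈ Subgroup.closure (Set.range ja ∪ Set.range jb) := hgen ▸ Subgroup.mem_top h
  induction hmem using Subgroup.closure_induction_left with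
  | one => exact ⟨0, 1, 1, 1, by simp, by simp, by simp [descendingProd]⟩
  | mul_left x hx y _ ih =>
    rcases hx with ⟨x, rfl⟩ | ⟨x, rfl⟩
    · exact hA x y ih
    · exact hB x y ih
  | inv_mul_cancel x hx y _ ih =>
    rcases hx with ⟨x, rfl⟩ | ⟨x, rfl⟩
    · exact map_inv ja x ▸ hA x⁻¹ y ih
    · exact map_inv jb x ▸ hB x⁻¹ y ih

theorem IsAmalgamatedFreeProduct.closure_range_union_range {H : Type u} {A : Type v} {B : Type w}
    {P : Type (max u v w)} [Group H] [Group A] [Group B] [Group P] {φ : H →* A} {ψ : H →* B}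
    {ja : A →* P} {jb : B →* P} (hP : IsAmalgamatedFreeProduct φ ψ ja jb) :
    Subgroup.closure (Set.range ja ∪ Set.range jb) = ⊤ := by
  set K := Subgroup.closure (Set.range ja ∪ Set.range jb)
  let fa : A →* K := ja.codRestrict K fun a => Subgroup.subset_closure (Or.inl ⟨a, rfl⟩)
  let fb : B →* K := jb.codRestrict K fun b => Subgroup.subset_closure (Or.inr ⟨b, rfl⟩)
  obtain ⟨r, ⟨hra, hrb⟩, -⟩ := hP.2 K fa fb
    (MonoidHom.ext fun z => Subtype.ext (DFunLike.congr_fun hP.1 z))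
  have hid : K.subtype.comp r = MonoidHom.id P :=
    (hP.2 P ja jb hP.1).unique
      ⟨by rw [MonoidHom.comp_assoc, hra]; rfl, by rw [MonoidHom.comp_assoc, hrb]; rfl⟩
      ⟨rfl, rfl⟩
  refine eq_top_iff.2 fun z _ => ?_
  have hz : (r z : P) = z := DFunLike.congr_fun hid z
  exact hz ▸ (r z).2

theorem IsResiduallyFinitePGroup.exists_hom {p : ℕ} {G : Type u} [Group G]
    (hG : IsResiduallyFinitePGroup p G) {g : G} (hg : g ≠ 1) :
    ∃ (A : Type u) (_ : Group A) (f : G →* A), Finite A ∧ IsPGroup p A ∧ f g ≠ 1 := by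
  obtain ⟨N, hN, hgN, hfin, hpN⟩ := hG g hg
  exact ⟨G ⧸ N, inferInstance, QuotientGroup.mk' N, hfin, hpN,
    fun h => hgN ((QuotientGroup.eq_one_iff g).1 h)⟩

theorem isResiduallyFinitePGroup_of_exists_hom {p : ℕ} {G : Type u} [Group G]
    (h : ∀ g : G, g ≠ 1 → ∃ (A : Type u) (_ : Group A) (f : G →* A),
      Finite A ∧ IsPGroup p A ∧ f g ≠ 1) : IsResiduallyFinitePGroup p G := by
  intro g hg
  obtain ⟨A, _, f, hfin, hpA, hfg⟩ := h g hg
  exact ⟨f.ker, inferInstance, hfg,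
    Finite.of_injective _ (QuotientGroup.kerLift_injective f),
    hpA.of_injective _ (QuotientGroup.kerLift_injective f)⟩

theorem IsResiduallyFinitePGroup.exists_hom_forall_lt {p : ℕ} [Fact p.Prime] {G : Type u} [Group G]
    (hG : IsResiduallyFinitePGroup p G) (b : ℕ → G) (m : ℕ) :
    ∃ (A : Type u) (_ : Group A) (f : G →* A), Finite A ∧ IsPGroup p A ∧
      ∀ i < m, b i ≠ 1 → f (b i) ≠ 1 := by
  induction m with
  | zero =>
    exact ⟨PUnit, inferInstance, 1, inferInstance, IsPGroup.of_subsingleton _ _, by simp⟩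
  | succ m ih =>
    obtain ⟨A, _, f, hfin, hpA, hf⟩ := ih
    by_cases hb : b m = 1
    · refine ⟨A, _, f, hfin, hpA, fun i hi hne => hf i ?_ hne⟩
      exact lt_of_le_of_ne (Nat.lt_succ_iff.1 hi) (by rintro rfl; exact hne hb)
    · obtain ⟨A', _, f', hfin', hpA', hf'⟩ := hG.exists_hom hb
      refine ⟨A × A', inferInstance, f.prod f', inferInstance, ?_, ?_⟩
      · obtain ⟨k, hk⟩ := IsPGroup.iff_card.1 hpA
        obtain ⟨k', hk'⟩ := IsPGroup.iff_card.1 hpA'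
        exact IsPGroup.of_card (n := k + k') (by rw [Nat.card_prod, hk, hk', pow_add])
      · intro i hi hne h
        rcases (Nat.lt_succ_iff.1 hi).lt_or_eq with hlt | rfl
        · exact hf i hlt hne (congrArg Prod.fst h)
        · exact hf' (congrArg Prod.snd h)

/-- **Proposition 6.3.** Let `p` be a prime and `G` a finitely generated group that is
residually a finite `p`-group.  Let `u ∈ G` have infinite order with `C_G(u) = ⟨u⟩`.
Then for every `n ≥ 0`, the free product with amalgamation `H = G *_{(u = x^{pⁿ})} ⟨x⟩`
is residually a finite `p`-group.  The amalgamated product is any pushout `P` of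
`ℤ → G, 1 ↦ u` and `ℤ → ⟨x⟩ = ℤ, 1 ↦ pⁿ`. -/
theorem residually_finite_p_of_amalgamated_root_adjunction
    (p : ℕ) (hp : p.Prime)
    {G : Type u} [Group G] (hfg : Group.FG G)
    (hres : IsResiduallyFinitePGroup p G)
    (u : G) (hu : ¬ IsOfFinOrder u)
    (hcent : Subgroup.centralizer ({u} : Set G) = Subgroup.zpowers u)
    (n : ℕ)
    {P : Type u} [Group P] (jG : G →* P) (jx : Multiplicative ℤ →* P)
    (hP : IsAmalgamatedFreeProduct (zpowersHom G u)
      (zpowersHom (Multiplicative ℤ) (Multiplicative.ofAdd ((p : ℤ) ^ n))) jG jx) :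
    IsResiduallyFinitePGroup p P := by
  have : Fact p.Prime := ⟨hp⟩
  refine isResiduallyFinitePGroup_of_exists_hom fun h hh => ?_
  have hcompat : ∀ k : ℤ, jx (Multiplicative.ofAdd ((p : ℤ) ^ n * k)) = jG (u ^ k) := by
    intro k
    have h1 := DFunLike.congr_fun hP.1 (Multiplicative.ofAdd k)
    simp only [MonoidHom.comp_apply, zpowersHom_apply, toAdd_ofAdd] at h1
    rw [h1, ← ofAdd_zsmul, smul_eq_mul, mul_comm]
  obtain ⟨m, g, c, a, hc, ha, rfl⟩ := exists_descendingProd_eq jG jx (Subgroup.zpowers u)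
    (Subgroup.zpowers (Multiplicative.ofAdd ((p : ℤ) ^ n)))
    (by
      rintro _ ⟨k, rfl⟩
      refine ⟨u ^ k, ?_⟩
      rw [← hcompat]
      change _ = jx (Multiplicative.ofAdd ((p : ℤ) ^ n) ^ k)
      rw [← ofAdd_zsmul, smul_eq_mul, mul_comm])
    (by
      rintro _ ⟨k, rfl⟩
      refine ⟨_, ⟨k, rfl⟩, ?_⟩
      change jx (Multiplicative.ofAdd ((p : ℤ) ^ n) ^ k) = jG (u ^ k)
      rw [← hcompat, ← ofAdd_zsmul, smul_eq_mul, mul_comm])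
    hP.closure_range_union_range h
  obtain ⟨A, _, f, hfin, hpA, hf, hfg⟩ : ∃ (A : Type u) (_ : Group A) (f : G →* A), Finite A ∧
      IsPGroup p A ∧ (∀ i < m, a i * u * (u * a i)⁻¹ ≠ 1 → f (a i * u * (u * a i)⁻¹) ≠ 1) ∧
      (m = 0 → f g ≠ 1) := by
    rcases Nat.eq_zero_or_pos m with rfl | hm
    · obtain ⟨A, _, f, hfin, hpA, hfg⟩ := hres.exists_hom (g := g) (by
        rintro rfl
        exact hh (by simp [descendingProd]))
      exact ⟨A, _, f, hfin, hpA, by simp, fun _ => hfg⟩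
    · obtain ⟨A, _, f, hfin, hpA, hf⟩ :=
        hres.exists_hom_forall_lt (fun i => a i * u * (u * a i)⁻¹) m
      exact ⟨A, _, f, hfin, hpA, hf, by omega⟩
  obtain ⟨Q, _, α, x, hQfin, hQ, hα, hx, hxk⟩ := exists_root_in_finite_pGroup hpA (f u) n
  have hxz : ∀ k : ℤ, x ^ (k * (p : ℤ) ^ n) = α (f u) ^ k := fun k => by
    rw [mul_comm, zpow_mul, ← hx]
    norm_cast
  rcases Nat.eq_zero_or_pos m with rfl | hm
  · obtain ⟨F, ⟨hF, -⟩, -⟩ := hP.2 Q (α.comp f) (zpowersHom Q x) (by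
      ext
      simpa using (hxz 1).symm)
    refine ⟨Q, _, F, hQfin, hQ, ?_⟩
    have h1 : F (jG g) = α (f g) := DFunLike.congr_fun hF g
    rw [descendingProd, mul_one, h1]
    exact (map_ne_one_iff α hα).2 (hfg rfl)
  · obtain ⟨Γ, _, σ, y, hΓfin, hΓ, hcomm, hne⟩ := exists_twist_descendingProd_ne_one hQ
      (Subgroup.zpowers (α (f u))) (fun i => α (f (a i)))
      (fun i => x ^ (Multiplicative.toAdd (c i))) hm
      (by
        intro i hi hmem
        apply hc i hi
        obtain ⟨k, hk⟩ := hxk _ hmem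
        refine ⟨k, ?_⟩
        change Multiplicative.ofAdd ((p : ℤ) ^ n) ^ k = c i
        rw [← ofAdd_zsmul, smul_eq_mul, mul_comm]
        exact Multiplicative.toAdd.injective (by rw [hk]; push_cast; rw [toAdd_ofAdd, mul_comm]))
      (by
        rintro i hi h0 ⟨k, hk⟩
        have hk : α (f u) ^ k = α (f (a i)) := hk
        refine hf i hi ?_ ?_
        · intro h1
          apply ha i hi h0
          rw [← hcent, Subgroup.mem_centralizer_singleton_iff]
          exact mul_inv_eq_one.1 h1
        · apply hα
          rw [map_one]
          simp only [map_mul, map_inv, ← hk]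
          exact mul_inv_eq_one.2 (Commute.zpow_self _ _).eq)
      (α (f g))
    obtain ⟨F, ⟨hF, hF'⟩, -⟩ := hP.2 Γ (σ.comp (α.comp f))
      ((MulAut.conj y).toMonoidHom.comp (σ.comp (zpowersHom Q x))) (by
        ext
        have h1 := (hcomm _ (Subgroup.mem_zpowers (α (f u)))).symm.eq
        have h2 := hxz 1
        simp only [one_mul, zpow_one] at h2
        simp [h2, h1])
    refine ⟨Γ, _, F, hΓfin, hΓ, ?_⟩
    rw [map_mul, map_descendingProd]
    have hG : ∀ z, F (jG z) = σ (α (f z)) := fun z => DFunLike.congr_fun hF z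
    have hX : ∀ z, F (jx z) = y * σ (x ^ Multiplicative.toAdd z) * y⁻¹ :=
      fun z => DFunLike.congr_fun hF' z
    simpa only [map_mul, hG, hX] using hne
end
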